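/- arXiv:math/0203065 — 3 statements merged into one kernel-verified Lean document; each statement's English description precedes it below -/
import Mathlib

section
/- Every continuum of weight at most ℵ₁ is a continuous image of the Čech–Stone remainder H* of the half line H = [0,∞). That is, for every nonempty compact connected Hausdorff space K that admits a base for its topology of cardinality at most ℵ₁, there exists a continuous surjection from H* onto K. -/
open Set Topology Function

noncomputable section

/-- The half line `H = [0,∞)` as a topological space. -/
abbrev HalfLine : Type := ↥(Set.Ici (0 : ℝ))

/-- The Čech–Stone remainder `H* = βH ∖ H` of the half line. -/
def HalfLineStar : Set (StoneCech HalfLine) :=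
  (Set.range (stoneCechUnit : HalfLine → StoneCech HalfLine))ᶜ

open Filter FirstOrder unitInterval

/-!
The half line is mapped into a cube `I ^ ι`, where `ι` has cardinality at most `ℵ₁` and `K ⊆ I ^ ι`
contains the base point, by running through a sequence of loops. If the ranges of the loops
converge to `K` in the Vietoris topology, then `K` is the set of cluster points of this map at
infinity, which is the image of `H*` under the Stone–Čech extension.

Since the cube is locally path connected, the connected set `K` is a Vietoris limit of a net of
ranges of loops, but in general not of a sequence. The passage from nets to sequences is the
`ℵ₁`-saturation of reduced powers modulo the Fréchet filter: a transfinite recursion of length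
`ω₁` replaces the coordinates of the net one by one by sequences of loops in `I`, preserving all
first-order formulas in a countable language that records which basic boxes are hit by a finite
tuple of coordinate loops. These formulas determine the limit of the ranges.
-/

theorem exists_forall_eventually_of_forall_finset {N M T : Type*} [Nonempty M] [Countable T]
    {m : Filter N} {r : N → ℕ} (hr : Tendsto r m atTop) (Q : T → N → M → Prop)
    (h : ∀ F : Finset T, ∀ᶠ n in m, ∃ z, ∀ t ∈ F, Q t n z) :
    ∃ z : N → M, ∀ t, ∀ᶠ n in m, Q t n (z n) := by
  classical
  obtain ⟨e, he⟩ := exists_injective_nat T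
  let P (n : N) (k : ℕ) : Prop := ∃ z, ∀ t, e t < k → Q t n z
  -- `z n` satisfies as many of the conditions as possible, but never more than `r n` of them
  have hP (n : N) : P n (Nat.findGreatest (P n) (r n)) :=
    Nat.findGreatest_spec (Nat.zero_le _)
      ⟨Classical.arbitrary M, fun t ht => absurd ht (Nat.not_lt_zero _)⟩
  choose z hz using hP
  refine ⟨z, fun t => ?_⟩
  have hfin : {s | e s < e t + 1}.Finite := (finite_lt_nat (e t + 1)).preimage he.injOn
  filter_upwards [h hfin.toFinset, hr.eventually_ge_atTop (e t + 1)] with n ⟨w, hw⟩ hrn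
  refine hz n t (Nat.lt_of_succ_le (Nat.le_findGreatest hrn ⟨w, fun s hs => hw s ?_⟩))
  exact hfin.mem_toFinset.2 hs

theorem exists_forall_of_wellFoundedLT {ι X : Type*} [Nonempty X] [Preorder ι] [WellFoundedLT ι]
    {P : ∀ α : ι, (Iio α → X) → X → Prop}
    (h : ∀ (α : ι) (x : ι → X), (∀ β < α, P β (fun γ => x γ) (x β)) →
      ∃ z, P α (fun γ => x γ) z) :
    ∃ x : ι → X, ∀ α, P α (fun γ => x γ) (x α) := by
  let x : ι → X := wellFounded_lt.fix fun α y => Classical.epsilon (P α fun γ => y γ.1 γ.2)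
  have hx (α : ι) : x α = Classical.epsilon (P α fun γ => x γ) := wellFounded_lt.fix_eq _ α
  refine ⟨x, fun α => ?_⟩
  induction α using WellFoundedLT.induction with
  | ind α ih =>
    rw [hx α]
    exact Classical.epsilon_spec (h α x ih)

section Saturation

variable {L : Language} {M J N ι κ : Type*} [L.Structure M] {l : Filter J} {m : Filter N}
  {b : ι → J → M} {x : ι → N → M}

/-- A family `x` of elements of the reduced power `M ^ N / m` satisfies every formula satisfied by
the family `b` in the reduced power `M ^ J / l`, where a formula is said to hold in a reduced power
when it holds eventually along the filter. -/
def FormulaTransfer (L : Language) [L.Structure M] (l : Filter J) (m : Filter N) (b : ι → J → M)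
    (x : ι → N → M) : Prop :=
  ∀ φ : L.Formula ι, (∀ᶠ j in l, φ.Realize (b · j)) → ∀ᶠ n in m, φ.Realize (x · n)

theorem FormulaTransfer.comp (h : FormulaTransfer L l m b x) (s : κ → ι) :
    FormulaTransfer L l m (b ∘ s) (x ∘ s) := fun φ hφ => by
  have := h (φ.relabel s)
  simp only [Language.Formula.realize_relabel] at this
  exact this hφ

theorem formulaTransfer_of_forall_Iic [l.NeBot] [LinearOrder ι]
    (h : ∀ α : ι, FormulaTransfer L l m (fun i : Iic α => b i) fun i : Iic α => x i) :
    FormulaTransfer L l m b x := fun φ hφ => by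
  classical
  cases isEmpty_or_nonempty ι
  · obtain ⟨j, hj⟩ := hφ.exists
    exact .of_forall fun n => Subsingleton.elim (b · j) (x · n) ▸ hj
  obtain ⟨α, hα⟩ := φ.freeVarFinset.bddAbove
  let ψ : L.Formula (Iic α) := φ.restrictFreeVar fun i => ⟨i, hα i.2⟩
  have realize_ψ (v : ι → M) : ψ.Realize (fun i => v i) ↔ φ.Realize v :=
    Language.BoundedFormula.realize_restrictFreeVar v fun _ => rfl
  filter_upwards [h α ψ (hφ.mono fun j => (realize_ψ (b · j)).2)] with n
  exact (realize_ψ (x · n)).1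

theorem FormulaTransfer.exists_extension {β : Type*} [Countable ι] [Countable L.Symbols] [Finite β]
    [Nonempty M] {r : N → ℕ} (hr : Tendsto r m atTop) (h : FormulaTransfer L l m b x)
    (c : β → J → M) :
    ∃ z : β → N → M, FormulaTransfer L l m (Sum.elim b c) (Sum.elim x z) := by
  let T := {φ : L.Formula (ι ⊕ β) // ∀ᶠ j in l, φ.Realize fun i => Sum.elim b c i j}
  have key (F : Finset T) :
      ∀ᶠ n in m, ∃ z : β → M, ∀ φ ∈ F, φ.1.Realize (Sum.elim (x · n) z) := by
    let χ : L.Formula ι := (Language.Formula.iInf fun φ : F => φ.1.1).iExs β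
    have realize_χ (v : ι → M) :
        χ.Realize v ↔ ∃ z : β → M, ∀ φ ∈ F, φ.1.Realize (Sum.elim v z) := by
      simp only [χ, Language.Formula.realize_iExs, Language.Formula.realize_iInf, Subtype.forall]
    simp only [← realize_χ]
    refine h χ ?_
    filter_upwards [(eventually_all_finset F).2 fun φ _ => φ.2] with j hj
    refine (realize_χ _).2 ⟨(c · j), fun φ hφ => ?_⟩
    convert hj φ hφ using 1
    ext (i | i) <;> rfl
  obtain ⟨z, hz⟩ := exists_forall_eventually_of_forall_finset hr _ key
  refine ⟨fun i n => z n i, fun φ hφ => ?_⟩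
  filter_upwards [hz ⟨φ, hφ⟩] with n hn
  convert hn using 1
  ext (i | i) <;> rfl

theorem FormulaTransfer.Iic_of_sumElim [LinearOrder ι] {α : ι}
    (h : FormulaTransfer L l m (Sum.elim (fun i : Iio α => b i) fun _ : Unit => b α)
      (Sum.elim (fun i : Iio α => x i) fun _ => x α)) :
    FormulaTransfer L l m (fun i : Iic α => b i) fun i : Iic α => x i := by
  let f : Iio α ⊕ Unit → ι := Sum.elim (↑) fun _ => α
  let s (i : Iic α) : Iio α ⊕ Unit := if hi : i < α then .inl ⟨i, hi⟩ else .inr ()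
  have hs : f ∘ s = (↑) := by
    ext i
    by_cases hi : i < α
    · simp [f, s, hi]
    · simp [f, s, i.2.antisymm (not_lt.1 hi)]
  have hf : FormulaTransfer L l m (b ∘ f) (x ∘ f) := by rwa [Sum.comp_elim, Sum.comp_elim]
  have := hf.comp s
  rwa [comp_assoc, comp_assoc, hs] at this

theorem exists_formulaTransfer_of_countable_Iio [LinearOrder ι] [WellFoundedLT ι]
    (hι : ∀ α : ι, (Iio α).Countable) [Countable L.Symbols] [Nonempty M] {r : N → ℕ}
    (hr : Tendsto r m atTop) [l.NeBot] (b : ι → J → M) :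
    ∃ x : ι → N → M, FormulaTransfer L l m b x := by
  obtain ⟨x, hx⟩ := exists_forall_of_wellFoundedLT (X := N → M) (P := fun α y z =>
      FormulaTransfer L l m (Sum.elim (fun i : Iio α => b i) fun _ : Unit => b α)
        (Sum.elim y fun _ => z)) fun α x hx => by
    have := (hι α).to_subtype
    have hα : FormulaTransfer L l m (fun i : Iio α => b i) fun i : Iio α => x i :=
      formulaTransfer_of_forall_Iic fun β =>
        (hx β β.2).Iic_of_sumElim.comp fun i : Iic β => (⟨i.1, i.2⟩ : Iic β.1)
    obtain ⟨z, hz⟩ := hα.exists_extension hr fun _ : Unit => b α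
    exact ⟨z (), hz⟩
  exact ⟨x, formulaTransfer_of_forall_Iic fun α => (hx α).Iic_of_sumElim⟩

theorem exists_formulaTransfer (hι : Cardinal.mk ι ≤ Cardinal.aleph 1) [Countable L.Symbols]
    [Nonempty M] {r : N → ℕ} (hr : Tendsto r m atTop) [l.NeBot] (b : ι → J → M) :
    ∃ x : ι → N → M, FormulaTransfer L l m b x := by
  obtain ⟨_, _, hmk⟩ := Cardinal.exists_ord_eq_type_lt ι
  refine exists_formulaTransfer_of_countable_Iio (fun α => ?_) hr b
  rw [← Cardinal.le_aleph0_iff_set_countable, ← Cardinal.lt_aleph_one_iff]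
  exact (Cardinal.mk_Iio_lt α hmk).trans_le hι

end Saturation

theorem isTopologicalBasis_pi_comp {ι Y : Type*} [TopologicalSpace Y]
    {𝓑 : ∀ n, Set (Set (Fin n → Y))} (h𝓑 : ∀ n, TopologicalSpace.IsTopologicalBasis (𝓑 n)) :
    TopologicalSpace.IsTopologicalBasis
      {W : Set (ι → Y) | ∃ n, ∃ s : Fin n → ι, ∃ U ∈ 𝓑 n, W = (· ∘ s) ⁻¹' U} := by
  have continuous_comp {n : ℕ} (s : Fin n → ι) : Continuous fun z : ι → Y => z ∘ s :=
    continuous_pi fun i => continuous_apply (s i)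
  refine TopologicalSpace.isTopologicalBasis_of_isOpen_of_nhds ?_ fun z V hz hV => ?_
  · rintro _ ⟨n, s, U, hU, rfl⟩
    exact ((h𝓑 n).isOpen hU).preimage (continuous_comp s)
  · obtain ⟨F, u, hu, hFV⟩ := isOpen_pi_iff.1 hV z hz
    let s (k : Fin F.card) : ι := F.equivFin.symm k
    have hpi : IsOpen (univ.pi fun k => u (s k)) :=
      isOpen_set_pi finite_univ fun k _ => (hu _ (F.equivFin.symm k).2).1
    obtain ⟨U, hU, hzU, hUu⟩ := (h𝓑 _).exists_subset_of_mem_open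
      (show z ∘ s ∈ univ.pi fun k => u (s k) from fun k _ => (hu _ (F.equivFin.symm k).2).2) hpi
    refine ⟨_, ⟨_, s, U, hU, rfl⟩, hzU, fun y hy => hFV fun i hi => ?_⟩
    simpa [s] using hUu hy (F.equivFin ⟨i, hi⟩) (mem_univ _)

theorem comap_stoneCechUnit_nhds_le_cocompact {X : Type*} [TopologicalSpace X] {y : StoneCech X}
    (hy : y ∉ range (stoneCechUnit : X → StoneCech X)) : comap stoneCechUnit (𝓝 y) ≤ cocompact X :=
  hasBasis_cocompact.ge_iff.2 fun K hK =>
    ⟨(stoneCechUnit '' K)ᶜ,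
      (hK.image continuous_stoneCechUnit).isClosed.isOpen_compl.mem_nhds
        fun hyK => hy (image_subset_range _ _ hyK),
      fun _ hxK hx => hxK (mem_image_of_mem _ hx)⟩

theorem notMem_range_stoneCechUnit_of_tendsto {X : Type*} [TopologicalSpace X]
    [CompletelyRegularSpace X] [WeaklyLocallyCompactSpace X] {l : Filter X} [l.NeBot]
    (hl : l ≤ cocompact X) {y : StoneCech X} (hy : Tendsto stoneCechUnit l (𝓝 y)) :
    y ∉ range (stoneCechUnit : X → StoneCech X) := by
  rintro ⟨x, rfl⟩
  have hlx : l ≤ 𝓝 x := by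
    rwa [isInducing_stoneCechUnit.nhds_eq_comap, ← tendsto_iff_comap]
  exact NeBot.ne ‹_› (le_bot_iff.1 (disjoint_nhds_cocompact x hlx hl))

theorem stoneCechExtend_image_compl_range {X Z : Type*} [TopologicalSpace X]
    [CompletelyRegularSpace X] [WeaklyLocallyCompactSpace X] [TopologicalSpace Z] [CompactSpace Z]
    [T2Space Z] {f : X → Z} (hf : Continuous f) :
    stoneCechExtend hf '' (range (stoneCechUnit : X → StoneCech X))ᶜ =
      {z | MapClusterPt z (cocompact X) f} := by
  have hext {l : Filter X} {y : StoneCech X} (hy : Tendsto stoneCechUnit l (𝓝 y)) :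
      Tendsto f l (𝓝 (stoneCechExtend hf y)) := by
    simpa only [← stoneCechExtend_extends hf] using
      ((continuous_stoneCechExtend hf).tendsto y).comp hy
  refine Subset.antisymm ?_ fun z hz => ?_
  · rintro _ ⟨y, hy, rfl⟩
    have : (comap stoneCechUnit (𝓝 y)).NeBot := isDenseInducing_stoneCechUnit.comap_nhds_neBot y
    exact (hext tendsto_comap).mapClusterPt.mono (comap_stoneCechUnit_nhds_le_cocompact hy)
  · obtain ⟨U, hU, hUz⟩ := mapClusterPt_iff_ultrafilter.1 hz
    obtain ⟨y, -, hy⟩ := isCompact_univ.ultrafilter_le_nhds (U.map stoneCechUnit) (by simp)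
    exact ⟨y, notMem_range_stoneCechUnit_of_tendsto hU hy, tendsto_nhds_unique (hext hy) hUz⟩

theorem exists_isClosedEmbedding_pi_unitInterval {K : Type*} [TopologicalSpace K] [CompactSpace K]
    [T2Space K] {B : Set (Set K)} (hB : TopologicalSpace.IsTopologicalBasis B) (p : K) :
    ∃ g : K → B × B → I, IsClosedEmbedding g ∧ g p = 0 := by
  have urysohn (i : B × B) : ∃ f : K → I, Continuous f ∧ f p = 0 ∧
      (closure i.1.1 ⊆ i.2.1 → p ∉ i.2.1 → EqOn f 1 (closure i.1.1) ∧ EqOn f 0 i.2.1ᶜ) := by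
    by_cases hi : closure i.1.1 ⊆ i.2.1 ∧ p ∉ i.2.1
    · obtain ⟨f, hf0, hf1, hf⟩ := exists_continuous_zero_one_of_isClosed
        (hB.isOpen i.2.2).isClosed_compl isClosed_closure (disjoint_compl_left_iff_subset.2 hi.1)
      exact ⟨fun x => ⟨f x, hf x⟩, by fun_prop, Subtype.ext (hf0 hi.2), fun _ _ =>
        ⟨fun x hx => Subtype.ext (hf1 hx), fun x hx => Subtype.ext (hf0 hx)⟩⟩
    · exact ⟨0, continuous_const, rfl, fun h hp => absurd ⟨h, hp⟩ hi⟩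
  choose f hf hfp hfB using urysohn
  -- Points other than `p` suffice, which allows all coordinates to vanish at `p`.
  have separate {x y : K} (hxy : x ≠ y) (hxp : x ≠ p) : ∃ i, f i x ≠ f i y := by
    obtain ⟨V, hV, hxV, hVyp⟩ := hB.exists_subset_of_mem_open
      (show x ∈ ({y, p}ᶜ : Set K) by simp [hxy, hxp])
      (toFinite {y, p}).isClosed.isOpen_compl
    obtain ⟨U, hU, hxU, hUV⟩ := hB.exists_closure_subset ((hB.isOpen hV).mem_nhds hxV)
    obtain ⟨h1, h0⟩ := hfB (⟨U, hU⟩, ⟨V, hV⟩) hUV fun hp => hVyp hp (by simp)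
    refine ⟨(⟨U, hU⟩, ⟨V, hV⟩), ?_⟩
    rw [h1 (subset_closure hxU), h0 fun hy => hVyp hy (by simp)]
    exact one_ne_zero
  refine ⟨fun x i => f i x, (continuous_pi hf).isClosedEmbedding fun x y hxy => ?_, funext hfp⟩
  by_contra hne
  rcases ne_or_eq x p with hxp | rfl
  · obtain ⟨i, hi⟩ := separate hne hxp
    exact hi (congrFun hxy i)
  · obtain ⟨i, hi⟩ := separate (Ne.symm hne) (Ne.symm hne)
    exact hi (congrFun hxy i).symm

section Vietoris

attribute [local instance] TopologicalSpace.vietoris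

theorem tendsto_nhds_vietoris_iff {N X : Type*} [TopologicalSpace X] {m : Filter N}
    {A : N → Set X} {C : Set X} :
    Tendsto A m (𝓝 C) ↔ (∀ U, IsOpen U → C ⊆ U → ∀ᶠ n in m, A n ⊆ U) ∧
      ∀ U, IsOpen U → (C ∩ U).Nonempty → ∀ᶠ n in m, (A n ∩ U).Nonempty := by
  simp only [TopologicalSpace.tendsto_nhds_generateFrom_iff, mem_union, or_imp, forall_and,
    forall_mem_image]
  rfl

theorem tendsto_nhds_vietoris_of_isTopologicalBasis {N X : Type*} [TopologicalSpace X]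
    [CompactSpace X] [RegularSpace X] {m : Filter N} {A : N → Set X} {C : Set X} (hC : IsClosed C)
    {𝓑 : Set (Set X)} (h𝓑 : TopologicalSpace.IsTopologicalBasis 𝓑)
    (hit : ∀ W ∈ 𝓑, (C ∩ W).Nonempty → ∀ᶠ n in m, (A n ∩ W).Nonempty)
    (miss : ∀ W ∈ 𝓑, Disjoint C (closure W) → ∀ᶠ n in m, Disjoint (A n) W) :
    Tendsto A m (𝓝 C) := by
  refine tendsto_nhds_vietoris_iff.2 ⟨fun U hU hCU => ?_, fun U hU ⟨z, hzC, hzU⟩ => ?_⟩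
  · have hcover (z : X) (hz : z ∈ Uᶜ) : ∃ W ∈ 𝓑, z ∈ W ∧ Disjoint C (closure W) := by
      obtain ⟨V, hV, hVclosed, hVC⟩ := exists_mem_nhds_isClosed_subset
        (hC.isOpen_compl.mem_nhds fun hzC => hz (hCU hzC))
      obtain ⟨W, hW, hzW, hWV⟩ := h𝓑.mem_nhds_iff.1 hV
      exact ⟨W, hW, hzW,
        disjoint_left.2 fun y hyC hyW => hVC (closure_minimal hWV hVclosed hyW) hyC⟩
    choose! W hW hzW hdisj using hcover
    obtain ⟨t, htU, ht⟩ := hU.isClosed_compl.isCompact.elim_nhds_subcover W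
      fun z hz => (h𝓑.isOpen (hW z hz)).mem_nhds (hzW z hz)
    filter_upwards [(eventually_all_finset t).2 fun z hz =>
      miss (W z) (hW z (htU z hz)) (hdisj z (htU z hz))] with n hn y hy
    by_contra hyU
    obtain ⟨z, hz, hyz⟩ := mem_iUnion₂.1 (ht hyU)
    exact disjoint_left.1 (hn z hz) hy hyz
  · obtain ⟨W, hW, hzW, hWU⟩ := h𝓑.exists_subset_of_mem_open hzU hU
    exact (hit W hW ⟨z, hzC, hzW⟩).mono fun n => .mono (inter_subset_inter_right _ hWU)

section HitLanguage

open TopologicalSpace (countableBasis isBasis_countableBasis)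

variable {Y M T ι : Type*} [TopologicalSpace Y] [SecondCountableTopology Y] [FunLike M T Y]

/-- The relational language with an `n`-ary symbol for each member of a countable basis of
`Fin n → Y`. It is interpreted in sets `M` of functions with values in `Y`, where the symbol `U`
holds of a tuple of functions when their diagonal product hits `U`. -/
def hitLanguage (Y : Type*) [TopologicalSpace Y] [SecondCountableTopology Y] : Language where
  Functions _ := Empty
  Relations n := countableBasis (Fin n → Y)

instance hitLanguage.countable_symbols : Countable (hitLanguage Y).Symbols :=
  have : ∀ n, Countable ((hitLanguage Y).Functions n) := fun _ => inferInstanceAs (Countable Empty)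
  have : ∀ n, Countable ((hitLanguage Y).Relations n) := fun n =>
    (TopologicalSpace.countable_countableBasis (Fin n → Y)).to_subtype
  inferInstanceAs (Countable (Sigma _ ⊕ Sigma _))

instance hitLanguage.structure : (hitLanguage Y).Structure M where
  funMap f := f.elim
  RelMap U v := ∃ t, (fun i => v i t) ∈ U.1

/-- The formula saying that the diagonal product of the functions `s 0, …, s (n - 1)` hits `U`. -/
def hitFormula {n : ℕ} (s : Fin n → ι) (U : countableBasis (Fin n → Y)) :
    (hitLanguage Y).Formula ι :=
  Language.Relations.formula (L := hitLanguage Y) U fun k => .var (s k)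

theorem realize_hitFormula {n : ℕ} (s : Fin n → ι) (U : countableBasis (Fin n → Y)) (v : ι → M) :
    (hitFormula s U).Realize v ↔ ((range fun t i => v i t) ∩ (· ∘ s) ⁻¹' U.1).Nonempty := by
  rw [inter_comm, ← image_preimage_eq_inter_range, image_nonempty]
  exact Language.Formula.realize_rel (L := hitLanguage Y)

theorem exists_tendsto_range_of_tendsto_range [CompactSpace Y] [RegularSpace Y] [Nonempty M]
    (hι : Cardinal.mk ι ≤ Cardinal.aleph 1) {J N : Type*} {l : Filter J} [l.NeBot] {m : Filter N}
    {r : N → ℕ} (hr : Tendsto r m atTop) {C : Set (ι → Y)} (hC : IsClosed C) {b : ι → J → M}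
    (hb : Tendsto (fun j => range fun t i => b i j t) l (𝓝 C)) :
    ∃ x : ι → N → M, Tendsto (fun n => range fun t i => x i n t) m (𝓝 C) := by
  obtain ⟨x, hx⟩ := exists_formulaTransfer (L := hitLanguage Y) (l := l) hι hr b
  have h𝓑 := isTopologicalBasis_pi_comp (ι := ι) fun n => isBasis_countableBasis (Fin n → Y)
  obtain ⟨hsubset, hmeet⟩ := tendsto_nhds_vietoris_iff.1 hb
  refine ⟨x, tendsto_nhds_vietoris_of_isTopologicalBasis hC h𝓑
    (fun W hW hCW => ?_) fun W hW hCW => ?_⟩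
  · have hbW := hmeet W (h𝓑.isOpen hW) hCW
    obtain ⟨n, s, U, hU, rfl⟩ := hW
    have := hx (hitFormula s ⟨U, hU⟩)
    simp only [realize_hitFormula] at this
    exact this hbW
  · have hbW := hsubset (closure W)ᶜ isClosed_closure.isOpen_compl hCW.subset_compl_right
    obtain ⟨n, s, U, hU, rfl⟩ := hW
    have := hx (hitFormula s ⟨U, hU⟩).not
    simp only [Language.Formula.realize_not, realize_hitFormula, ← not_disjoint_iff_nonempty_inter,
      not_not] at this
    exact this (hbW.mono fun j hj => (subset_compl_iff_disjoint_right.1 hj).mono_right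
      subset_closure)

end HitLanguage

theorem exists_loop_subset_range_of_finite {Z : Type*} [TopologicalSpace Z] {W : Set Z}
    (hW : IsPathConnected W) {c : Z} (hc : c ∈ W) {F : Set Z} (hF : F.Finite) (hFW : F ⊆ W) :
    ∃ γ : Path c c, F ⊆ range γ ∧ range γ ⊆ W := by
  induction F, hF using Set.Finite.induction_on with
  | empty => exact ⟨Path.refl c, empty_subset _, by simpa⟩
  | @insert a F _ _ ih =>
    obtain ⟨haW, hFW⟩ := insert_subset_iff.1 hFW
    obtain ⟨γ, hFγ, hγW⟩ := ih hFW
    let δ := (hW.joinedIn c hc a haW).somePath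
    have hδW : range δ ⊆ W := range_subset_iff.2 (hW.joinedIn c hc a haW).somePath_mem
    refine ⟨γ.trans (δ.trans δ.symm), ?_, ?_⟩
    · simp only [Path.trans_range, Path.symm_range, union_self]
      exact insert_subset (.inr δ.target_mem_range) (hFγ.trans subset_union_left)
    · simpa only [Path.trans_range, Path.symm_range, union_self] using union_subset hγW hδW

theorem mem_closure_range_loops {Z : Type*} [TopologicalSpace Z] [LocallyPathConnectedSpace Z]
    {C : Set Z} (hC : IsPreconnected C) {c : Z} (hc : c ∈ C) :
    C ∈ closure (range fun γ : Path c c => range γ) := by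
  rw [TopologicalSpace.vietoris.isTopologicalBasis.mem_closure_iff, forall_mem_image]
  rintro u ⟨hu, huopen⟩ ⟨hCu, hmeet⟩
  have hCW : C ⊆ connectedComponentIn (⋃₀ u) c := hC.subset_connectedComponentIn hc hCu
  have hW : IsPathConnected (connectedComponentIn (⋃₀ u) c) :=
    (isOpen_sUnion huopen).connectedComponentIn.isConnected_iff_isPathConnected.1
      (isConnected_connectedComponentIn_iff.2 (hCu hc))
  have : Nonempty Z := ⟨c⟩
  choose! z hz using hmeet
  obtain ⟨γ, hzγ, hγW⟩ := exists_loop_subset_range_of_finite hW (hCW hc) (hu.image z)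
    (image_subset_iff.2 fun U hU => hCW (hz U hU).1)
  exact ⟨range γ, ⟨hγW.trans (connectedComponentIn_subset _ _),
    fun U hU => ⟨z U, hzγ (mem_image_of_mem z hU), (hz U hU).2⟩⟩, mem_range_self γ⟩

section Concatenation

variable {Z : Type*} [TopologicalSpace Z] {c : Z}

/-- The concatenation of a sequence of loops: the interval `[n, n + 1]` is mapped by the `n`-th
loop. The pieces agree at the integers because all loops are based at `c`. -/
def concatLoops (x : ℕ → Path c c) (t : HalfLine) : Z :=
  (x ⌊(t : ℝ)⌋₊).extend (t - ⌊(t : ℝ)⌋₊)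

theorem concatLoops_eq_extend (x : ℕ → Path c c) {n : ℕ} {t : HalfLine}
    (ht : (t : ℝ) ∈ Icc (n : ℝ) (n + 1)) : concatLoops x t = (x n).extend (t - n) := by
  rcases ht.2.lt_or_eq with hlt | heq
  · rw [concatLoops, (Nat.floor_eq_iff t.2).2 ⟨ht.1, hlt⟩]
  · rw [← Nat.cast_add_one] at heq
    rw [concatLoops, heq, Nat.floor_natCast]
    simp

theorem image_concatLoops_Icc (x : ℕ → Path c c) (n : ℕ) :
    concatLoops x '' {t | (t : ℝ) ∈ Icc (n : ℝ) (n + 1)} = range (x n) := by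
  refine Subset.antisymm ?_ (range_subset_iff.2 fun s => ?_)
  · rintro _ ⟨t, ht, rfl⟩
    rw [concatLoops_eq_extend x ht, ← (x n).extend_range]
    exact mem_range_self _
  · let t : HalfLine := ⟨n + s, add_nonneg n.cast_nonneg s.2.1⟩
    have ht : (t : ℝ) ∈ Icc (n : ℝ) (n + 1) :=
      ⟨le_add_of_nonneg_right s.2.1, add_le_add_right s.2.2 _⟩
    exact ⟨t, ht, by simp [concatLoops_eq_extend x ht, t]⟩

theorem continuous_concatLoops (x : ℕ → Path c c) : Continuous (concatLoops x) := by
  have hint : LocallyFinite fun n : ℤ => Icc (n : ℝ) (n + 1) :=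
    locallyFinite_Icc_of_tendsto tendsto_intCast_atTop_atTop
      (tendsto_atBot_add_const_right _ 1 (tendsto_intCast_atBot_iff.2 tendsto_id))
  have hlf : LocallyFinite fun n : ℕ => Icc (n : ℝ) (n + 1) := by
    simpa [comp_def] using hint.comp_injective Nat.cast_injective
  refine (hlf.preimage_continuous continuous_subtype_val).continuous ?_ ?_ fun n => ?_
  · exact eq_univ_of_forall fun t : HalfLine =>
      mem_iUnion.2 ⟨⌊(t : ℝ)⌋₊, Nat.floor_le t.2, (Nat.lt_floor_add_one _).le⟩
  · exact fun n => isClosed_Icc.preimage continuous_subtype_val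
  · refine ContinuousOn.congr ?_ fun t ht => concatLoops_eq_extend x ht
    exact ((x n).continuous_extend.comp (by fun_prop)).continuousOn

instance properSpace_halfLine : ProperSpace HalfLine := .of_isClosed isClosed_Ici

theorem cocompact_halfLine : cocompact HalfLine = comap (↑) (atTop : Filter ℝ) := by
  have hdist : dist (⟨0, self_mem_Ici⟩ : HalfLine) = (↑) := by
    ext t
    rw [Subtype.dist_eq, dist_zero_left, Real.norm_of_nonneg t.2]
  rw [← comap_dist_left_atTop_eq_cocompact (⟨0, self_mem_Ici⟩ : HalfLine), hdist]

theorem setOf_mapClusterPt_concatLoops [RegularSpace Z] {C : Set Z} (hC : IsClosed C)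
    {x : ℕ → Path c c} (hx : Tendsto (fun n => range (x n)) atTop (𝓝 C)) :
    {z | MapClusterPt z (cocompact HalfLine) (concatLoops x)} = C := by
  obtain ⟨hsubset, hmeet⟩ := tendsto_nhds_vietoris_iff.1 hx
  simp only [mapClusterPt_iff_frequently, cocompact_halfLine]
  refine Subset.antisymm (fun z hz => ?_) fun z hzC U hU => ?_
  · by_contra hzC
    obtain ⟨V, hV, hVclosed, hVC⟩ := exists_mem_nhds_isClosed_subset (hC.isOpen_compl.mem_nhds hzC)
    have hfloor : Tendsto (fun t : HalfLine => ⌊(t : ℝ)⌋₊) (comap (↑) (atTop : Filter ℝ)) atTop :=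
      tendsto_nat_floor_atTop.comp tendsto_comap
    refine hz V hV ?_
    filter_upwards [hfloor.eventually (hsubset Vᶜ hVclosed.isOpen_compl (subset_compl_comm.1 hVC))]
      with t ht
    refine ht (image_concatLoops_Icc x _ ▸ mem_image_of_mem _ ?_)
    exact ⟨Nat.floor_le t.2, (Nat.lt_floor_add_one _).le⟩
  · obtain ⟨V, hVU, hVopen, hzV⟩ := mem_nhds_iff.1 hU
    refine (atTop_basis.comap _).frequently_iff.2 fun {a} _ => ?_
    have hge : ∀ᶠ n : ℕ in atTop, a ≤ n := tendsto_natCast_atTop_atTop.eventually_ge_atTop a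
    obtain ⟨n, ⟨y, hyn, hyV⟩, han⟩ := ((hmeet V hVopen ⟨z, hzC, hzV⟩).and hge).exists
    rw [← image_concatLoops_Icc] at hyn
    obtain ⟨t, ht, rfl⟩ := hyn
    exact ⟨t, han.trans ht.1, hVU hyV⟩

end Concatenation

theorem exists_continuous_image_halfLineStar_eq {ι Y : Type*}
    (hι : Cardinal.mk ι ≤ Cardinal.aleph 1) [TopologicalSpace Y] [CompactSpace Y] [T2Space Y]
    [SecondCountableTopology Y] [PathConnectedSpace Y] [LocallyPathConnectedSpace Y]
    {C : Set (ι → Y)} (hC : IsClosed C) (hconn : IsPreconnected C) {y : Y} (hy : (fun _ => y) ∈ C) :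
    ∃ E : StoneCech HalfLine → ι → Y, Continuous E ∧ E '' HalfLineStar = C := by
  let l : Filter (Path (fun _ : ι => y) fun _ => y) := comap (fun γ => range γ) (𝓝 C)
  have : l.NeBot := by
    simpa only [l, comap_neBot_iff_frequently, mem_closure_iff_frequently] using
      mem_closure_range_loops hconn hy
  let b (i : ι) (γ : Path (fun _ : ι => y) fun _ => y) : Path y y := γ.map (continuous_apply i)
  have hb : Tendsto (fun γ => range fun t i => b i γ t) l (𝓝 C) := tendsto_comap
  obtain ⟨x, hx⟩ := exists_tendsto_range_of_tendsto_range hι tendsto_id hC hb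
  let γ (n : ℕ) : Path (fun _ : ι => y) fun _ => y := Path.pi fun i => x i n
  refine ⟨stoneCechExtend (continuous_concatLoops γ), continuous_stoneCechExtend _, ?_⟩
  rw [HalfLineStar, stoneCechExtend_image_compl_range, setOf_mapClusterPt_concatLoops hC hx]

end Vietoris

instance pathConnectedSpace_unitInterval : PathConnectedSpace I :=
  isPathConnected_iff_pathConnectedSpace.1
    ((convex_Icc (0 : ℝ) 1).isPathConnected (nonempty_Icc.2 zero_le_one))

instance locallyPathConnectedSpace_unitInterval : LocallyPathConnectedSpace I :=
  (convex_Icc (0 : ℝ) 1).locallyPathConnectedSpace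

/-- Every continuum of weight at most ℵ₁ is a continuous image of `H*`. -/
theorem halfLineStar_maps_onto_continua_of_weight_le_aleph_one
    (K : Type*) [TopologicalSpace K] [CompactSpace K] [T2Space K]
    [ConnectedSpace K] [Nonempty K]
    (hw : ∃ B : Set (Set K), TopologicalSpace.IsTopologicalBasis B ∧
      Cardinal.mk B ≤ Cardinal.aleph 1) :
    ∃ f : HalfLineStar → K, Continuous f ∧ Surjective f := by
  obtain ⟨B, hB, hmk⟩ := hw
  obtain ⟨g, hg, hgp⟩ := exists_isClosedEmbedding_pi_unitInterval hB (Classical.arbitrary K)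
  have hBB : Cardinal.mk (B × B) ≤ Cardinal.aleph 1 := by
    rw [Cardinal.mk_prod, Cardinal.lift_id]
    exact (mul_le_mul' hmk hmk).trans (Cardinal.mul_eq_self (Cardinal.aleph0_le_aleph 1)).le
  obtain ⟨E, hE, himage⟩ := exists_continuous_image_halfLineStar_eq hBB hg.isClosed_range
    (isPreconnected_range hg.continuous) (mem_range.2 ⟨_, hgp⟩)
  have hmaps : MapsTo E HalfLineStar (range g) := mapsTo_iff_image_subset.2 himage.subset
  exact ⟨hg.isEmbedding.toHomeomorph.symm ∘ hmaps.restrict,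
    hg.isEmbedding.toHomeomorph.symm.continuous.comp (hE.continuousOn.mapsToRestrict hmaps),
    hg.isEmbedding.toHomeomorph.symm.surjective.comp
      (hmaps.restrict_surjective_iff.2 himage.superset)⟩
end
end

section
/- (Parovičenko) Every nonempty compact Hausdorff space of weight at most ℵ₁ is a continuous image of ℕ*: if X is a nonempty compact Hausdorff space admitting a base for its topology of cardinality at most ℵ₁, then there is a continuous surjection from ℕ* onto X. -/
open Set Topology Function

noncomputable section

/-- The Čech–Stone remainder `ℕ* = βℕ ∖ ℕ` of the discrete space `ℕ`. -/
def NatStar : Set (StoneCech ℕ) :=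
  (Set.range (stoneCechUnit : ℕ → StoneCech ℕ))ᶜ

/-!
The continuous map on `βℕ` extending a sequence `u` in a compact Hausdorff space sends `ℕ*` onto
the set of cluster points of `u`. Urysohn functions embed `X` in a cube with at most `ℵ₁`
coordinates, so it suffices to find a sequence in the cube that clusters exactly at the points of a
given closed set `K`. Its coordinates are chosen one at a time along a well-order with countable
initial segments, maintaining that the coordinates chosen so far cluster exactly at the projection
of `K`. At each step only countably many coordinates are involved, so everything is metrizable: the
sequence constructed so far is close to the projections of points of `K`, and these points can be
chosen to follow, along a sparse subsequence, a dense sequence in `K`. No separate limit step is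
needed, since by compactness the invariant is determined by finite sets of coordinates.
-/

open Filter TopologicalSpace

section ClusterSet

variable {X Y : Type*} [TopologicalSpace X] [TopologicalSpace Y]

/-- The cluster set of a sequence: the set of its cluster points at infinity. -/
def clusterSet (u : ℕ → X) : Set X :=
  {x | MapClusterPt x atTop u}

theorem clusterSet_nonempty [CompactSpace X] (u : ℕ → X) : (clusterSet u).Nonempty :=
  exists_clusterPt_of_compactSpace (map u atTop)

theorem clusterSet_comp_subset (u : ℕ → X) {φ : ℕ → ℕ} (hφ : Tendsto φ atTop atTop) :
    clusterSet (u ∘ φ) ⊆ clusterSet u :=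
  fun _ hx => MapClusterPt.of_comp hφ hx

theorem image_clusterSet [CompactSpace X] [T2Space Y] {f : X → Y} (hf : Continuous f)
    (u : ℕ → X) : f '' clusterSet u = clusterSet (f ∘ u) := by
  refine Subset.antisymm ?_ fun y hy => ?_
  · rintro _ ⟨x, hx, rfl⟩
    exact MapClusterPt.continuousAt_comp hf.continuousAt hx
  · obtain ⟨U, hU, hUy⟩ := mapClusterPt_iff_ultrafilter.1 hy
    have hx : Tendsto u U (𝓝 (U.map u).lim) := (U.map u).le_nhds_lim
    exact ⟨_, mapClusterPt_iff_ultrafilter.2 ⟨U, hU, hx⟩,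
      tendsto_nhds_unique ((hf.tendsto _).comp hx) hUy⟩

theorem closure_range_subset_range_union_clusterSet [T1Space X] (u : ℕ → X) :
    closure (range u) ⊆ range u ∪ clusterSet u := by
  intro x hx
  refine or_iff_not_imp_left.2 fun hxu => mapClusterPt_atTop_iff_forall_mem_closure.2 fun m => ?_
  rw [← image_univ, ← Iio_union_Ici (a := m), image_union, closure_union,
    ((finite_Iio m).image u).isClosed.closure_eq] at hx
  exact hx.resolve_left fun h => hxu (image_subset_range u _ h)

theorem clusterSet_eq_of_tendsto_dist {X : Type*} [PseudoMetricSpace X] {u v : ℕ → X}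
    (h : Tendsto (fun n => dist (u n) (v n)) atTop (𝓝 0)) : clusterSet u = clusterSet v := by
  ext x
  exact mapClusterPt_iff_ultrafilter.trans <| (exists_congr fun U => and_congr_right fun hU =>
    tendsto_iff_of_dist (h.mono_left hU)).trans mapClusterPt_iff_ultrafilter.symm

theorem exists_clusterSet_eq_univ (X : Type*) [TopologicalSpace X] [SeparableSpace X]
    [Nonempty X] : ∃ u : ℕ → X, clusterSet u = univ := by
  refine ⟨fun n => denseSeq X n.unpair.1, eq_univ_of_forall fun x =>
    mapClusterPt_iff_frequently.2 fun s hs => frequently_atTop.2 fun m => ?_⟩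
  obtain ⟨_, hks, k, rfl⟩ := mem_closure_iff_nhds.1 (denseRange_denseSeq X x) s hs
  exact ⟨Nat.pair k m, Nat.right_le_pair k m, by simpa only [Nat.unpair_pair] using hks⟩

end ClusterSet

section Remainder

theorem natStar_eq_clusterSet : NatStar = clusterSet (stoneCechUnit : ℕ → StoneCech ℕ) := by
  refine Subset.antisymm (fun p hp => ?_) ?_
  · exact (closure_range_subset_range_union_clusterSet _
      (denseRange_stoneCechUnit p)).resolve_left hp
  · rintro _ hp ⟨n, rfl⟩
    have hn : ClusterPt n atTop := isEmbedding_stoneCechUnit.isInducing.mapClusterPt_iff.1 hp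
    have hfreq : ∃ᶠ k in atTop, k = n := hn.frequently (isOpen_discrete {n} |>.mem_nhds rfl)
    obtain ⟨k, hk, hnk⟩ := (hfreq.and_eventually (eventually_gt_atTop n)).exists
    exact hnk.ne' hk

theorem stoneCechExtend_image_natStar {Y : Type*} [TopologicalSpace Y] [CompactSpace Y]
    [T2Space Y] (u : ℕ → Y) :
    stoneCechExtend (continuous_of_discreteTopology (f := u)) '' NatStar = clusterSet u := by
  rw [natStar_eq_clusterSet, image_clusterSet (continuous_stoneCechExtend _),
    stoneCechExtend_extends]

theorem exists_continuous_surjective_natStar_of_isEmbedding {X Y : Type*} [TopologicalSpace X]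
    [TopologicalSpace Y] [CompactSpace Y] [T2Space Y] {e : X → Y} (he : IsEmbedding e)
    {u : ℕ → Y} (hu : clusterSet u = range e) :
    ∃ f : NatStar → X, Continuous f ∧ Surjective f := by
  let E : StoneCech ℕ → Y := stoneCechExtend (continuous_of_discreteTopology (f := u))
  have hE : E '' NatStar = range e := (stoneCechExtend_image_natStar u).trans hu
  have hmaps : MapsTo E NatStar (range e) := mapsTo_iff_image_subset.2 hE.le
  refine ⟨he.toHomeomorph.symm ∘ hmaps.restrict, ?_, ?_⟩
  · exact he.toHomeomorph.symm.continuous.comp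
      ((continuous_stoneCechExtend _).restrict hmaps)
  · exact he.toHomeomorph.symm.surjective.comp
      ((hmaps.restrict_surjective_iff).2 hE.ge)

end Remainder

section Lifting

theorem exists_seq_tendsto_dist_of_clusterSet_subset {X Y : Type*} [PseudoMetricSpace Y]
    [CompactSpace Y] {f : X → Y} {u : ℕ → Y} (hu : clusterSet u ⊆ range f) :
    ∃ z : ℕ → X, Tendsto (fun n => dist (u n) (f (z n))) atTop (𝓝 0) := by
  have hne : (range f).Nonempty := (clusterSet_nonempty u).mono hu
  have hu_near : Tendsto u atTop (𝓝ˢ (range f)) :=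
    isCompact_univ.tendsto_nhdsSet_of_mapClusterPt (by simp) fun y _ hy => hu hy
  have hdist : Tendsto (fun n => Metric.infDist (u n) (range f)) atTop (𝓝 0) := by
    rw [← nhdsSet_singleton]
    exact ((Metric.continuous_infDist_pt _).tendsto_nhdsSet
      fun y hy => Metric.infDist_zero_of_mem hy).comp hu_near
  have hz (n : ℕ) : ∃ z, dist (u n) (f z) < Metric.infDist (u n) (range f) + 1 / (n + 1 : ℝ) := by
    simpa using (Metric.infDist_lt_iff hne).1
      (lt_add_of_pos_right (Metric.infDist (u n) (range f)) (Nat.one_div_pos_of_nat (n := n)))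
  choose z hz using hz
  refine ⟨z, squeeze_zero (fun n => dist_nonneg) (fun n => (hz n).le) ?_⟩
  simpa only [add_zero] using hdist.add tendsto_one_div_add_atTop_nhds_zero_nat

theorem exists_seq_tendsto_dist_and_clusterSet_eq_univ {X Y : Type*} [TopologicalSpace X]
    [SeparableSpace X] [PseudoMetricSpace Y] [CompactSpace Y] {f : X → Y} {u : ℕ → Y}
    (hu : clusterSet u = range f) :
    ∃ w : ℕ → X, Tendsto (fun n => dist (u n) (f (w n))) atTop (𝓝 0) ∧
      clusterSet w = univ := by
  have : Nonempty X := range_nonempty_iff_nonempty.1 (hu ▸ clusterSet_nonempty u)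
  obtain ⟨z, hz⟩ := exists_seq_tendsto_dist_of_clusterSet_subset hu.le
  obtain ⟨y, hy⟩ := exists_clusterSet_eq_univ X
  have hfreq (k : ℕ) : ∃ᶠ n in atTop, dist (u n) (f (y k)) < 1 / (k + 1 : ℝ) := by
    have hk : MapClusterPt (f (y k)) atTop u := hu.ge (mem_range_self (y k))
    exact hk.frequently (Metric.ball_mem_nhds _ Nat.one_div_pos_of_nat)
  obtain ⟨φ, hφ, hφy⟩ := extraction_forall_of_frequently hfreq
  have hext : extend φ y z ∘ φ = y := extend_comp hφ.injective y z
  refine ⟨extend φ y z, ?_, univ_subset_iff.1 ?_⟩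
  · refine Metric.tendsto_nhds.2 fun ε hε => ?_
    simp only [dist_zero_right, Real.norm_of_nonneg dist_nonneg]
    obtain ⟨m, hm⟩ := exists_nat_one_div_lt hε
    filter_upwards [hz.eventually (gt_mem_nhds hε), eventually_ge_atTop (φ m)] with n hzn hmn
    by_cases hn : ∃ k, φ k = n
    · obtain ⟨k, rfl⟩ := hn
      rw [hφ.injective.extend_apply]
      exact ((hφy k).trans_le (Nat.one_div_le_one_div (hφ.le_iff_le.1 hmn))).trans hm
    · rwa [extend_apply' _ _ _ hn]
  · have hsub := clusterSet_comp_subset (extend φ y z) hφ.tendsto_atTop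
    rwa [hext, hy] at hsub

theorem exists_clusterSet_prodMk_eq {Y Z : Type*} [TopologicalSpace Y] [CompactSpace Y]
    [MetrizableSpace Y] [TopologicalSpace Z] [CompactSpace Z] [MetrizableSpace Z]
    {K : Set (Y × Z)} (hK : IsClosed K) {u : ℕ → Y} (hu : clusterSet u = Prod.fst '' K) :
    ∃ v : ℕ → Z, clusterSet (fun n => (u n, v n)) = K := by
  let := metrizableSpaceMetric Y
  let := metrizableSpaceMetric Z
  have : CompactSpace K := isCompact_iff_compactSpace.1 hK.isCompact
  obtain ⟨w, hdist, hw⟩ := exists_seq_tendsto_dist_and_clusterSet_eq_univ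
    (f := fun p : K => p.1.1) (hu.trans (image_eq_range _ _))
  refine ⟨fun n => (w n).1.2, ?_⟩
  calc clusterSet (fun n => (u n, (w n).1.2)) = clusterSet (Subtype.val ∘ w) :=
        clusterSet_eq_of_tendsto_dist (by simpa [Prod.dist_eq] using hdist)
    _ = Subtype.val '' clusterSet w := (image_clusterSet continuous_subtype_val w).symm
    _ = K := by rw [hw, image_univ, Subtype.range_coe]

end Lifting

section Product

variable {I : Type*} {Y : I → Type*} [∀ i, TopologicalSpace (Y i)]

theorem clusterPt_map_domRestrict_iff {F : Filter (∀ i, Y i)} {S : Set I} {y : ∀ i : S, Y i} :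
    ClusterPt y (map S.domRestrict F) ↔ ∀ (J : Set I) (hJ : J ⊆ S), J.Finite →
      ClusterPt (domRestrict₂ hJ y) (map J.domRestrict F) := by
  refine ⟨fun h J hJ _ => h.map (Pi.continuous_domRestrict₂ hJ).continuousAt tendsto_map,
    fun h => clusterPt_iff_frequently.2 fun s hs => ?_⟩
  obtain ⟨J, hJ, t, ht, hts⟩ := Filter.mem_pi.1 (nhds_pi (a := y) ▸ hs)
  have hJS : Subtype.val '' J ⊆ S := Subtype.coe_image_subset S J
  have hbox : ∀ᶠ x in 𝓝 (domRestrict₂ hJS y), ∀ i : Subtype.val '' J, x i ∈ t ⟨i, hJS i.2⟩ := by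
    have := (hJ.image Subtype.val).to_subtype
    exact eventually_all.2 fun i => (continuous_apply i).continuousAt (ht _)
  exact frequently_map.2 <| (frequently_map.1 ((h _ hJS (hJ.image _)).frequently hbox)).mono
    fun x hx => hts fun i hi => hx ⟨i, i, hi, rfl⟩

variable {K : Set (∀ i, Y i)} {u : ℕ → ∀ i, Y i}

theorem clusterSet_domRestrict_of_isEmpty (hK : K.Nonempty) {S : Set I} [IsEmpty S] :
    clusterSet (S.domRestrict ∘ u) = S.domRestrict '' K :=
  (Subsingleton.eq_univ_of_nonempty (clusterSet_nonempty _)).trans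
    (Subsingleton.eq_univ_of_nonempty (hK.image _)).symm

section Projection

variable [∀ i, CompactSpace (Y i)] [∀ i, T2Space (Y i)]

theorem clusterSet_domRestrict_mono {S T : Set I} (hST : S ⊆ T)
    (hT : clusterSet (T.domRestrict ∘ u) = T.domRestrict '' K) :
    clusterSet (S.domRestrict ∘ u) = S.domRestrict '' K := by
  rw [← domRestrict₂_comp_domRestrict hST, comp_assoc,
    ← image_clusterSet (Pi.continuous_domRestrict₂ hST), hT, image_image]
  rfl

theorem clusterSet_domRestrict_of_forall_finite (hK : IsClosed K) {S : Set I}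
    (h : ∀ J ⊆ S, J.Finite → clusterSet (J.domRestrict ∘ u) = J.domRestrict '' K) :
    clusterSet (S.domRestrict ∘ u) = S.domRestrict '' K := by
  have hclosed (J : Set I) : IsClosed (J.domRestrict '' K) :=
    (hK.isCompact.image (Pi.continuous_domRestrict J)).isClosed
  have hiff (J : Set I) (y : ∀ i : J, Y i) :
      ClusterPt y (map J.domRestrict (𝓟 K)) ↔ y ∈ J.domRestrict '' K := by
    rw [map_principal, ← mem_closure_iff_clusterPt, (hclosed J).closure_eq]
  ext y
  rw [← hiff]
  refine clusterPt_map_domRestrict_iff (F := map u atTop).trans <| Iff.trans ?_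
    clusterPt_map_domRestrict_iff.symm
  refine forall₃_congr fun J hJ hfin => ?_
  rw [hiff, ← h J hJ hfin]
  rfl

theorem clusterSet_domRestrict_Iic [LinearOrder I] {i : I}
    (h : clusterSet (fun n => ((Iio i).domRestrict (u n), u n i)) =
      (fun x => ((Iio i).domRestrict x, x i)) '' K) :
    clusterSet ((Iic i).domRestrict ∘ u) = (Iic i).domRestrict '' K := by
  let ρ : (∀ j : Iic i, Y j) → (∀ j : Iio i, Y j) × Y i :=
    fun x => (domRestrict₂ Iio_subset_Iic_self x, x ⟨i, self_mem_Iic⟩)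
  have hρ : Continuous ρ := by fun_prop
  have hρ_inj : Injective ρ := by
    intro x y hxy
    ext ⟨j, hj⟩
    rcases (mem_Iic.1 hj).lt_or_eq with hji | rfl
    · exact congrFun (congrArg Prod.fst hxy) ⟨j, hji⟩
    · exact congrArg Prod.snd hxy
  refine hρ_inj.image_injective ?_
  rw [image_clusterSet hρ, image_image]
  exact h

theorem clusterSet_domRestrict_of_forall_Iic [LinearOrder I] (hK : IsClosed K)
    (hK_ne : K.Nonempty) {S : Set I}
    (h : ∀ i ∈ S, clusterSet ((Iic i).domRestrict ∘ u) = (Iic i).domRestrict '' K) :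
    clusterSet (S.domRestrict ∘ u) = S.domRestrict '' K := by
  refine clusterSet_domRestrict_of_forall_finite hK fun J hJ hfin => ?_
  rcases J.eq_empty_or_nonempty with rfl | hJ_ne
  · exact clusterSet_domRestrict_of_isEmpty hK_ne
  · obtain ⟨m, hm, hmax⟩ := exists_max_image J id hfin hJ_ne
    exact clusterSet_domRestrict_mono hmax (h m (hJ hm))

end Projection

theorem exists_forall_domRestrict_Iio [Preorder I] [WellFoundedLT I] {A : I → Type*}
    {P : ∀ i, (∀ j : Iio i, A j) → A i → Prop} (h : ∀ i p, ∃ a, P i p a) :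
    ∃ g : ∀ i, A i, ∀ i, P i ((Iio i).domRestrict g) (g i) := by
  choose s hs using h
  refine ⟨WellFoundedLT.fix fun i p => s i fun j => p j j.2, fun i => ?_⟩
  rw [WellFoundedLT.fix_eq]
  exact hs i _

variable [∀ i, CompactSpace (Y i)] [∀ i, MetrizableSpace (Y i)]

theorem exists_coordinate_clusterSet_eq (hK : IsClosed K) {S : Set I} (hS : S.Countable) (i : I)
    {v : ℕ → ∀ j : S, Y j} (hv : clusterSet v = S.domRestrict '' K) :
    ∃ c : ℕ → Y i, clusterSet (fun n => (v n, c n)) = (fun x => (S.domRestrict x, x i)) '' K := by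
  have := hS.to_subtype
  refine exists_clusterSet_prodMk_eq (hK.isCompact.image (by fun_prop)).isClosed ?_
  rw [hv, image_image]

theorem exists_clusterSet_eq_of_countable_Iio [LinearOrder I] [WellFoundedLT I]
    (hI : ∀ i : I, (Iio i).Countable) (hK : IsClosed K) (hK_ne : K.Nonempty) :
    ∃ u : ℕ → ∀ i, Y i, clusterSet u = K := by
  let P (i : I) (p : ∀ j : Iio i, ℕ → Y j) (c : ℕ → Y i) : Prop :=
    clusterSet (fun n j => p j n) = (Iio i).domRestrict '' K →
      clusterSet (fun n => ((fun j => p j n : ∀ j : Iio i, Y j), c n)) =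
        (fun x => ((Iio i).domRestrict x, x i)) '' K
  have hstep (i : I) (p : ∀ j : Iio i, ℕ → Y j) : ∃ c, P i p c := by
    by_cases hp : clusterSet (fun n j => p j n) = (Iio i).domRestrict '' K
    · exact (exists_coordinate_clusterSet_eq hK (hI i) i hp).imp fun c hc _ => hc
    · exact ⟨fun _ => hK_ne.some i, fun h => absurd h hp⟩
  obtain ⟨c, hc⟩ := exists_forall_domRestrict_Iio (A := fun i => ℕ → Y i) hstep
  let u : ℕ → ∀ i, Y i := fun n i => c i n
  have hIic (i : I) : clusterSet ((Iic i).domRestrict ∘ u) = (Iic i).domRestrict '' K := by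
    induction i using WellFoundedLT.induction with
    | ind i ih =>
      exact clusterSet_domRestrict_Iic
        (hc i (clusterSet_domRestrict_of_forall_Iic hK hK_ne ih))
  have hinj : Injective (univ.domRestrict : (∀ i, Y i) → _) :=
    fun x y h => funext fun i => congrFun h ⟨i, mem_univ i⟩
  refine ⟨u, hinj.image_injective ?_⟩
  rw [image_clusterSet (Pi.continuous_domRestrict univ)]
  exact clusterSet_domRestrict_of_forall_Iic hK hK_ne fun i _ => hIic i

theorem exists_clusterSet_eq_of_mk_le_aleph_one (hI : Cardinal.mk I ≤ Cardinal.aleph 1)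
    (hK : IsClosed K) (hK_ne : K.Nonempty) : ∃ u : ℕ → ∀ i, Y i, clusterSet u = K := by
  obtain ⟨_, _, hord⟩ := Cardinal.exists_ord_eq_type_lt I
  refine exists_clusterSet_eq_of_countable_Iio (fun i => ?_) hK hK_ne
  rw [← Cardinal.le_aleph0_iff_set_countable, ← Order.lt_succ_iff, Cardinal.succ_aleph0]
  exact (Cardinal.mk_Iio_lt i hord).trans_le hI

end Product

section Cube

variable {X : Type*} [TopologicalSpace X]

theorem exists_continuousMap_unitInterval_of_isClosed [NormalSpace X] {s t : Set X}
    (hs : IsClosed s) (ht : IsClosed t) (hst : Disjoint s t) :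
    ∃ f : C(X, unitInterval), EqOn f 0 s ∧ EqOn f 1 t := by
  obtain ⟨f, hf0, hf1, hf⟩ := exists_continuous_zero_one_of_isClosed hs ht hst
  exact ⟨⟨fun x => ⟨f x, hf x⟩, by fun_prop⟩, fun x hx => Subtype.ext (hf0 hx),
    fun x hx => Subtype.ext (hf1 hx)⟩

theorem exists_isEmbedding_cube_of_isTopologicalBasis [CompactSpace X] [T2Space X]
    {B : Set (Set X)} (hB : IsTopologicalBasis B) :
    ∃ e : X → B × B → unitInterval, IsEmbedding e := by
  have hsep (q : B × B) : ∃ f : C(X, unitInterval),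
      closure q.1.1 ⊆ q.2.1 → EqOn f 0 q.1 ∧ EqOn f 1 (q.2.1)ᶜ := by
    by_cases hq : closure q.1.1 ⊆ q.2.1
    · obtain ⟨f, hf0, hf1⟩ := exists_continuousMap_unitInterval_of_isClosed isClosed_closure
        (hB.isOpen q.2.2).isClosed_compl (disjoint_compl_right_iff_subset.2 hq)
      exact ⟨f, fun _ => ⟨hf0.mono subset_closure, hf1⟩⟩
    · exact ⟨0, fun h => absurd h hq⟩
  choose f hf using hsep
  refine ⟨fun x q => f q x, (Continuous.isClosedEmbedding (by fun_prop) ?_).isEmbedding⟩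
  intro x y hxy
  by_contra hne
  obtain ⟨V, hV, hxV, hVy⟩ := hB.exists_subset_of_mem_open (mem_compl_singleton_iff.2 hne)
    isOpen_compl_singleton
  obtain ⟨U, hU, hxU, hUV⟩ := hB.exists_closure_subset (hB.mem_nhds hV hxV)
  obtain ⟨h0, h1⟩ := hf (⟨U, hU⟩, ⟨V, hV⟩) hUV
  have h01 : (0 : unitInterval) = 1 :=
    (h0 hxU).symm.trans ((congrFun hxy _).trans (h1 fun hy => hVy hy rfl))
  exact zero_ne_one h01

end Cube

/-- (Parovičenko) Every nonempty compact Hausdorff space of weight at most ℵ₁ is a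
continuous image of `ℕ*`. -/
theorem natStar_maps_onto_compacta_of_weight_le_aleph_one
    (X : Type*) [TopologicalSpace X] [CompactSpace X] [T2Space X] [Nonempty X]
    (hw : ∃ B : Set (Set X), TopologicalSpace.IsTopologicalBasis B ∧
      Cardinal.mk B ≤ Cardinal.aleph 1) :
    ∃ f : NatStar → X, Continuous f ∧ Surjective f := by
  obtain ⟨B, hB, hB_card⟩ := hw
  have hcard : Cardinal.mk (B × B) ≤ Cardinal.aleph 1 := by
    simpa only [Cardinal.mk_prod, Cardinal.lift_id] using
      Cardinal.mul_le_of_le (Cardinal.aleph0_le_aleph 1) hB_card hB_card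
  obtain ⟨e, he⟩ := exists_isEmbedding_cube_of_isTopologicalBasis hB
  obtain ⟨u, hu⟩ := exists_clusterSet_eq_of_mk_le_aleph_one hcard
    (isCompact_range he.continuous).isClosed (range_nonempty e)
  exact exists_continuous_surjective_natStar_of_isEmbedding he hu
end
end

section
/- (Maćkowiak–Tymchatyn) Every metric continuum is the weakly confluent image of a hereditarily indecomposable metric continuum: for every nonempty compact connected metric space X there exist a nonempty compact connected metrizable hereditarily indecomposable space Y and a weakly confluent continuous surjection from Y onto X. -/
open Set Topology Function

universe u

/-- A space is hereditarily indecomposable if whenever two subcontinua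
(nonempty closed connected subsets) meet, one contains the other. -/
def HereditarilyIndecomposable (X : Type*) [TopologicalSpace X] : Prop :=
  ∀ A B : Set X, IsClosed A → IsConnected A → IsClosed B → IsConnected B →
    (A ∩ B).Nonempty → A ⊆ B ∨ B ⊆ A

/-- A continuous surjection `f : Y → X` is weakly confluent if every subcontinuum
(nonempty closed connected subset) of `X` is the image of a subcontinuum of `Y`. -/
def WeaklyConfluent {Y X : Type*} [TopologicalSpace Y] [TopologicalSpace X]
    (f : Y → X) : Prop :=
  ∀ K : Set X, IsClosed K → IsConnected K →
    ∃ L : Set Y, IsClosed L ∧ IsConnected L ∧ f '' L = K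

/-!
Let `f n` be a dense sequence of functions `X × [0, 1]^ℕ → [0, 1]`, each depending only on `X` and
on the coordinates before the `n`-th. Starting from the whole product, shrink `S n` to a suitable
component `S (n + 1)` of the part of `S n` on which the `n`-th coordinate `t` solves the equation
`zigzag t = f n` (unless `f n > 1/3` on `S n`), and let `Y` be the intersection. If subcontinua `A`
and `B` of `Y` meet but neither contains the other, then some `f n` is near `0` somewhere on `A`,
near `1` somewhere on `B`, below `2/3` on `A` and above `1/3` on `B`; solving `zigzag t = f n` then
confines `t` to `t < 1/3` on `A` and to `2/3 < t` on `B`, so `A` and `B` are disjoint after all. The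
projection `Y → X` is weakly confluent because the zigzag has degree one: a clopen part of the fold
has the same signed number of sheets over every point of the connected set `S n`, and this number is
one when the part contains the component of a lone lower sheet. Hence the fold over a subcontinuum
cannot fall apart near that component into pieces that each miss a fiber.
-/

open Filter
open scoped Set.Notation unitInterval

section Topology

variable {E : Type*} [TopologicalSpace E]

lemma isConnected_iInter_of_directed [T2Space E] {ι : Type*} [Nonempty ι] {K : ι → Set E}
    (hdir : Directed (· ⊇ ·) K) (hcompact : ∀ i, IsCompact (K i))
    (hconn : ∀ i, IsConnected (K i)) : IsConnected (⋂ i, K i) := by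
  have hclosed : ∀ i, IsClosed (K i) := fun i => (hcompact i).isClosed
  have hinter : IsCompact (⋂ i, K i) :=
    (hcompact (Classical.arbitrary ι)).of_isClosed_subset (isClosed_iInter hclosed)
      (iInter_subset K _)
  refine ⟨IsCompact.nonempty_iInter_of_directed_nonempty_isCompact_isClosed K hdir
    (fun i => (hconn i).nonempty) hcompact hclosed, ?_⟩
  rw [isPreconnected_closed_iff]
  rintro A B hA hB hcover ⟨a, ha, haA⟩ ⟨b, hb, hbB⟩
  by_contra hempty
  have hdisj : Disjoint ((⋂ i, K i) ∩ A) ((⋂ i, K i) ∩ B) :=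
    Set.disjoint_left.2 fun x hxA hxB => hempty ⟨x, hxA.1, hxA.2, hxB.2⟩
  obtain ⟨U, V, hU, hV, hAU, hBV, hUV⟩ :=
    SeparatedNhds.of_isCompact_isCompact (hinter.inter_right hA) (hinter.inter_right hB) hdisj
  obtain ⟨i, hi⟩ : ∃ i, K i ⊆ U ∪ V :=
    exists_subset_nhds_of_isCompact hdir hcompact fun x hx => (hU.union hV).mem_nhds <|
      (hcover hx).imp (fun hxA => hAU ⟨hx, hxA⟩) (fun hxB => hBV ⟨hx, hxB⟩)
  obtain ⟨x, -, hxU, hxV⟩ := (hconn i).isPreconnected U V hU hV hi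
    ⟨a, mem_iInter.1 ha i, hAU ⟨ha, haA⟩⟩ ⟨b, mem_iInter.1 hb i, hBV ⟨hb, hbB⟩⟩
  exact Set.disjoint_left.1 hUV hxU hxV

lemma image_iInter_of_directed_isCompact [T2Space E] {X ι : Type*} [TopologicalSpace X]
    [T1Space X] [Nonempty ι] {f : E → X} (hf : Continuous f) {K : ι → Set E}
    (hdir : Directed (· ⊇ ·) K) (hcompact : ∀ i, IsCompact (K i)) :
    f '' ⋂ i, K i = ⋂ i, f '' K i := by
  refine (image_iInter_subset K f).antisymm fun x hx => ?_
  have hfiber : IsClosed (f ⁻¹' {x}) := isClosed_singleton.preimage hf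
  obtain ⟨y, hy⟩ := IsCompact.nonempty_iInter_of_directed_nonempty_isCompact_isClosed
    (fun i => K i ∩ f ⁻¹' {x})
    (fun i j => (hdir i j).imp fun _ hk =>
      ⟨inter_subset_inter_left _ hk.1, inter_subset_inter_left _ hk.2⟩)
    (fun i => mem_iInter.1 hx i)
    (fun i => (hcompact i).inter_right hfiber) fun i => (hcompact i).isClosed.inter hfiber
  have hy : ∀ i, y ∈ K i ∧ f y = x := fun i => mem_iInter.1 hy i
  exact ⟨y, mem_iInter.2 fun i => (hy i).1, (hy (Classical.arbitrary ι)).2⟩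

lemma exists_isClopen_of_connectedComponent_subset [T2Space E] [CompactSpace E] {x : E}
    {O : Set E} (hO : IsOpen O) (hx : connectedComponent x ⊆ O) :
    ∃ D, IsClopen D ∧ x ∈ D ∧ D ⊆ O := by
  rw [connectedComponent_eq_iInter_isClopen] at hx
  have : Nonempty {s : Set E // IsClopen s ∧ x ∈ s} := ⟨univ, isClopen_univ, mem_univ x⟩
  obtain ⟨D, hD⟩ := exists_subset_nhds_of_isCompact
    (V := fun s : {s : Set E // IsClopen s ∧ x ∈ s} => (s : Set E))
    (fun s t => ⟨⟨s ∩ t, s.2.1.inter t.2.1, s.2.2, t.2.2⟩, inter_subset_left, inter_subset_right⟩)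
    (fun s => s.2.1.isClosed.isCompact) fun y hy => hO.mem_nhds (hx hy)
  exact ⟨D, D.2.1, D.2.2, hD⟩

lemma exists_isClopen_of_connectedComponentIn_subset [T2Space E] {F O : Set E} {x : E}
    (hF : IsCompact F) (hxF : x ∈ F) (hO : IsOpen O) (hx : connectedComponentIn F x ⊆ O) :
    ∃ D, IsClopen (F ↓∩ D) ∧ x ∈ D ∧ D ⊆ O := by
  have : CompactSpace F := isCompact_iff_compactSpace.1 hF
  rw [connectedComponentIn_eq_image hxF, image_subset_iff] at hx
  obtain ⟨D, hD, hxD, hDO⟩ :=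
    exists_isClopen_of_connectedComponent_subset (hO.preimage continuous_subtype_val) hx
  refine ⟨(↑) '' D, ?_, ⟨_, hxD, rfl⟩, image_subset_iff.2 hDO⟩
  rwa [preimage_image_eq D Subtype.val_injective]

lemma isClosed_connectedComponentIn {F : Set E} (hF : IsClosed F) (x : E) :
    IsClosed (connectedComponentIn F x) := by
  by_cases hx : x ∈ F
  · rw [connectedComponentIn_eq_image hx]
    exact hF.isClosedEmbedding_subtypeVal.isClosedMap _ isClosed_connectedComponent
  · rw [connectedComponentIn_eq_empty hx]
    exact isClosed_empty

lemma continuousOn_indicator_of_isClopen {A : Type*} [TopologicalSpace A] [Zero A] {G D : Set E}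
    {u : E → A} (hD : IsClopen (G ↓∩ D)) (hu : ContinuousOn u G) :
    ContinuousOn (D.indicator u) G := by
  rw [continuousOn_iff_continuous_domRestrict] at hu ⊢
  change Continuous ((G ↓∩ D).indicator (G.domRestrict u))
  exact hu.indicator (by simp [hD.frontier_eq])

lemma weaklyConfluent_comp_subtypeVal {X : Type*} [TopologicalSpace X] {f : E → X} {Y : Set E}
    (h : ∀ K : Set X, IsClosed K → IsConnected K →
      ∃ L ⊆ Y, IsClosed L ∧ IsConnected L ∧ f '' L = K) :
    WeaklyConfluent (f ∘ ((↑) : Y → E)) := by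
  intro K hK hKconn
  obtain ⟨L, hLY, hL, hLconn, rfl⟩ := h K hK hKconn
  have himage : ((↑) : Y → E) '' (Y ↓∩ L) = L := by
    rw [Subtype.image_preimage_coe, inter_eq_right.2 hLY]
  refine ⟨Y ↓∩ L, hL.preimage continuous_subtype_val, ?_, by rw [image_comp, himage]⟩
  exact ⟨(himage.symm ▸ hLconn.nonempty).of_image,
    IsInducing.subtypeVal.isPreconnected_image.1 (himage.symm ▸ hLconn.isPreconnected)⟩

lemma WeaklyConfluent.surjective {X : Type*} [TopologicalSpace X] [T1Space X] {f : E → X}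
    (hf : WeaklyConfluent f) : Surjective f := by
  intro x
  obtain ⟨L, -, -, hL⟩ := hf {x} isClosed_singleton isConnected_singleton
  obtain ⟨y, -, hy⟩ : x ∈ f '' L := hL ▸ mem_singleton x
  exact ⟨y, hy⟩

end Topology

lemma exists_seq_of_forall_exists_succ {α : Type*} {P : ℕ → α → Prop} {R : ℕ → α → α → Prop}
    {a : α} (ha : P 0 a) (hstep : ∀ n x, P n x → ∃ y, P (n + 1) y ∧ R n x y) :
    ∃ s : ℕ → α, s 0 = a ∧ ∀ n, P n (s n) ∧ R n (s n) (s (n + 1)) := by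
  choose! next hP hR using hstep
  let s : ℕ → α := fun n => Nat.rec a next n
  have hs : ∀ n, P n (s n) := fun n => by
    induction n with
    | zero => exact ha
    | succ n ih => exact hP n _ ih
  exact ⟨s, rfl, fun n => ⟨hs n, hR n _ (hs n)⟩⟩

section Zigzag

/-- The piecewise linear map with slopes `2`, `-1`, `2` folding `[0, 1]` three-to-one over
`[1/3, 2/3]`, written as the median of its three linear branches. -/
noncomputable def zigzag (t : ℝ) : ℝ := max (min (2 * t) (1 - t)) (2 * t - 1)

lemma continuous_zigzag : Continuous zigzag := by unfold zigzag; fun_prop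

lemma zigzag_half {v : ℝ} (hv : v ≤ 2 / 3) : zigzag (v / 2) = v := by
  rw [zigzag, min_eq_left (by linarith), max_eq_left (by linarith)]
  ring

lemma zigzag_one_sub {v : ℝ} (h : 1 / 3 ≤ v) (h' : v ≤ 2 / 3) : zigzag (1 - v) = v := by
  rw [zigzag, min_eq_right (by linarith), max_eq_left (by linarith)]
  ring

lemma zigzag_one_add_half {v : ℝ} (hv : 1 / 3 ≤ v) : zigzag ((1 + v) / 2) = v := by
  rw [zigzag, min_eq_right (by linarith), max_eq_right (by linarith)]
  ring

lemma lt_third_of_zigzag_lt {t : ℝ} (ht : zigzag t < 1 / 3) : t < 1 / 3 := by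
  obtain ⟨hmin, -⟩ := max_lt_iff.1 ht
  rcases min_lt_iff.1 hmin with h | h <;> linarith [(max_lt_iff.1 ht).2]

lemma two_thirds_lt_of_lt_zigzag {t : ℝ} (ht : 2 / 3 < zigzag t) : 2 / 3 < t := by
  rcases lt_max_iff.1 ht with h | h
  · linarith [(lt_min_iff.1 h).1, (lt_min_iff.1 h).2]
  · linarith

variable {Y : Type*} [TopologicalSpace Y] {A : Set Y} {g : Y → ℝ} {a c : Y}

lemma lt_third_of_zigzag_comp_lt (hA : IsPreconnected A) (hg : ContinuousOn g A)
    (ha : a ∈ A) (hc : c ∈ A) (hlt : ∀ y ∈ A, zigzag (g y) < 2 / 3) (hga : zigzag (g a) < 1 / 3) :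
    g c < 1 / 3 := by
  by_contra! hgc
  obtain ⟨y, hy, hgy⟩ :=
    hA.intermediate_value ha hc hg ⟨(lt_third_of_zigzag_lt hga).le, hgc⟩
  have hpeak : zigzag (1 / 3) = 2 / 3 := by norm_num [zigzag]
  exact (hlt y hy).ne (by rw [hgy, hpeak])

lemma two_thirds_lt_of_lt_zigzag_comp (hA : IsPreconnected A) (hg : ContinuousOn g A)
    (ha : a ∈ A) (hc : c ∈ A) (hlt : ∀ y ∈ A, 1 / 3 < zigzag (g y)) (hga : 2 / 3 < zigzag (g a)) :
    2 / 3 < g c := by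
  by_contra! hgc
  obtain ⟨y, hy, hgy⟩ :=
    hA.intermediate_value hc ha hg ⟨hgc, (two_thirds_lt_of_lt_zigzag hga).le⟩
  have hvalley : zigzag (2 / 3) = 1 / 3 := by norm_num [zigzag]
  exact (hlt y hy).ne' (by rw [hgy, hvalley])

lemma exists_continuous_separating_half [T4Space Y] {A B : Set Y} (hA : IsClosed A)
    (hB : IsClosed B) {a b : Y} (ha : a ∈ A \ B) (hb : b ∈ B \ A) :
    ∃ h : C(Y, I), h a = 0 ∧ h b = 1 ∧ (∀ y ∈ A, (h y : ℝ) ≤ 1 / 2) ∧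
      ∀ y ∈ B, 1 / 2 ≤ (h y : ℝ) := by
  obtain ⟨u, hua, huB, hu⟩ := exists_continuous_zero_one_of_isClosed
    (isClosed_singleton (x := a)) hB (Set.disjoint_singleton_left.2 ha.2)
  obtain ⟨v, hvA, hvb, hv⟩ := exists_continuous_zero_one_of_isClosed
    hA (isClosed_singleton (x := b)) (Set.disjoint_singleton_right.2 hb.2)
  let h : C(Y, I) := ⟨fun y => ⟨(u y + v y) / 2,
    by linarith [(hu y).1, (hv y).1], by linarith [(hu y).2, (hv y).2]⟩, by fun_prop⟩
  have hh : ∀ y, (h y : ℝ) = (u y + v y) / 2 := fun _ => rfl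
  refine ⟨h, Subtype.ext ?_, Subtype.ext ?_, fun y hy => ?_, fun y hy => ?_⟩
  · simp [hh, hua rfl, hvA ha.1]
  · simp [hh, huB hb.1, hvb rfl]
  · have hvy : v y = 0 := hvA hy
    linarith [hh y, (hu y).2]
  · have huy : u y = 1 := huB hy
    linarith [hh y, (hv y).1]

theorem hereditarilyIndecomposable_of_zigzag_lift [T4Space Y]
    (hlift : ∀ (h : C(Y, I)) (ε : ℝ), 0 < ε → ∃ f : Y → ℝ, (∀ y, |f y - h y| < ε) ∧
      ((∃ p, f p ≤ 1 / 3) → ∃ g : Y → ℝ, Continuous g ∧ ∀ y, zigzag (g y) = f y)) :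
    HereditarilyIndecomposable Y := by
  rintro A B hA hAconn hB hBconn ⟨c, hcA, hcB⟩
  by_contra! hnot
  obtain ⟨a, ha⟩ := not_subset.1 hnot.1
  obtain ⟨b, hb⟩ := not_subset.1 hnot.2
  obtain ⟨h, hha, hhb, hhA, hhB⟩ := exists_continuous_separating_half hA hB ha hb
  obtain ⟨f, hfh, hf⟩ := hlift h (1 / 6) (by norm_num)
  simp only [abs_lt] at hfh
  have hfa : f a < 1 / 3 := by linarith [(hfh a).2, show (h a : ℝ) = 0 by simp [hha]]
  have hfb : 2 / 3 < f b := by linarith [(hfh b).1, show (h b : ℝ) = 1 by simp [hhb]]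
  obtain ⟨g, hg, hgf⟩ := hf ⟨a, hfa.le⟩
  have hgc_lt : g c < 1 / 3 := lt_third_of_zigzag_comp_lt hAconn.isPreconnected hg.continuousOn
    ha.1 hcA (fun y hy => by linarith [hgf y, (hfh y).2, hhA y hy]) (by rwa [hgf])
  have hgc_gt : 2 / 3 < g c := two_thirds_lt_of_lt_zigzag_comp hBconn.isPreconnected
    hg.continuousOn hb.1 hcB (fun y hy => by linarith [hgf y, (hfh y).1, hhB y hy]) (by rwa [hgf])
  linarith

end Zigzag

section Sheets

variable {B E : Type*} [TopologicalSpace B] [TopologicalSpace E]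

/-- Abstract form of the three partial sections of the fold `{(b, t) | zigzag t = height b} → B`.
The maps are total but meaningful only where the fold has the sheet in question: `lower` for
`height ≤ 2/3`, `middle` for `1/3 ≤ height ≤ 2/3` and `upper` for `1/3 ≤ height`. -/
structure ZigzagSheets (B E : Type*) [TopologicalSpace B] [TopologicalSpace E] where
  height : B → ℝ
  lower : B → E
  middle : B → E
  upper : B → E
  continuous_height : Continuous height
  continuous_lower : Continuous lower
  continuous_middle : Continuous middle
  continuous_upper : Continuous upper
  lower_eq_middle : ∀ b, height b = 2 / 3 → lower b = middle b
  middle_eq_upper : ∀ b, height b = 1 / 3 → middle b = upper b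

namespace ZigzagSheets

/-- The fiber over `b` of the fold: the points of the sheets that are present at `b`. -/
def fiber (s : ZigzagSheets B E) (b : B) : Set E :=
  {x | (s.height b ≤ 2 / 3 ∧ x = s.lower b) ∨
    (s.height b ∈ Icc (1 / 3) (2 / 3) ∧ x = s.middle b) ∨ (1 / 3 ≤ s.height b ∧ x = s.upper b)}

/-- The signed sum of `u` over the sheets present at `b`, the middle sheet having sign `-1`. For the
indicator of a clopen part of the fold this is the degree of that part over `b`. -/
noncomputable def degree (s : ZigzagSheets B E) (u : E → ℤ) (b : B) : ℤ :=
  if s.height b ≤ 1 / 3 then u (s.lower b)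
  else if s.height b ≤ 2 / 3 then u (s.lower b) - u (s.middle b) + u (s.upper b)
  else u (s.upper b)

variable {s : ZigzagSheets B E} {S K : Set B} {F G C D : Set E} {u v : E → ℤ} {b p : B}

lemma lower_mem_fiber (hb : s.height b ≤ 2 / 3) : s.lower b ∈ s.fiber b :=
  Or.inl ⟨hb, rfl⟩

lemma middle_mem_fiber (hb : s.height b ∈ Icc (1 / 3) (2 / 3)) : s.middle b ∈ s.fiber b :=
  Or.inr (Or.inl ⟨hb, rfl⟩)

lemma upper_mem_fiber (hb : 1 / 3 ≤ s.height b) : s.upper b ∈ s.fiber b :=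
  Or.inr (Or.inr ⟨hb, rfl⟩)

lemma finite_fiber (s : ZigzagSheets B E) (b : B) : (s.fiber b).Finite := by
  refine (toFinite ({s.lower b, s.middle b, s.upper b} : Set E)).subset ?_
  rintro x (⟨-, rfl⟩ | ⟨-, rfl⟩ | ⟨-, rfl⟩) <;> simp

lemma degree_of_le_third (hb : s.height b ≤ 1 / 3) : s.degree u b = u (s.lower b) :=
  if_pos hb

lemma degree_of_mem_Icc (hb : s.height b ∈ Icc (1 / 3) (2 / 3)) :
    s.degree u b = u (s.lower b) - u (s.middle b) + u (s.upper b) := by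
  rcases hb.1.eq_or_lt with h | h
  · rw [degree_of_le_third h.ge, s.middle_eq_upper b h.symm, sub_add_cancel]
  · rw [degree, if_neg h.not_ge, if_pos hb.2]

lemma degree_of_two_thirds_le (hb : 2 / 3 ≤ s.height b) : s.degree u b = u (s.upper b) := by
  rcases hb.eq_or_lt with h | h
  · rw [degree_of_mem_Icc ⟨by linarith, h.ge⟩, s.lower_eq_middle b h.symm, sub_self, zero_add]
  · rw [degree, if_neg (by linarith), if_neg h.not_ge]

lemma degree_add : s.degree (u + v) b = s.degree u b + s.degree v b := by
  simp only [degree, Pi.add_apply]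
  split_ifs <;> ring

lemma degree_eq_zero_of_eqOn_fiber (hu : EqOn u 0 (s.fiber b)) : s.degree u b = 0 := by
  rcases le_total (s.height b) (1 / 3) with h | h
  · rw [degree_of_le_third h, hu (lower_mem_fiber (by linarith)), Pi.zero_apply]
  rcases le_total (s.height b) (2 / 3) with h' | h'
  · rw [degree_of_mem_Icc ⟨h, h'⟩, hu (lower_mem_fiber h'), hu (middle_mem_fiber ⟨h, h'⟩),
      hu (upper_mem_fiber h)]
    simp
  · rw [degree_of_two_thirds_le h', hu (upper_mem_fiber h), Pi.zero_apply]

lemma continuousOn_degree (hK : IsClosed K) (hKF : ∀ b ∈ K, s.fiber b ⊆ F)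
    (hu : ContinuousOn u F) : ContinuousOn (s.degree u) K := by
  have hφ := s.continuous_height
  have hlow : ContinuousOn (s.degree u) (K ∩ {b | s.height b ≤ 1 / 3}) :=
    (hu.comp s.continuous_lower.continuousOn
      fun b hb => hKF b hb.1 (lower_mem_fiber (le_trans hb.2 (by norm_num)))).congr
      fun b hb => degree_of_le_third hb.2
  have hmid : ContinuousOn (s.degree u) (K ∩ {b | s.height b ∈ Icc (1 / 3) (2 / 3)}) :=
    (((hu.comp s.continuous_lower.continuousOn
      fun b hb => hKF b hb.1 (lower_mem_fiber hb.2.2)).sub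
      (hu.comp s.continuous_middle.continuousOn
      fun b hb => hKF b hb.1 (middle_mem_fiber hb.2))).add
      (hu.comp s.continuous_upper.continuousOn
      fun b hb => hKF b hb.1 (upper_mem_fiber hb.2.1))).congr
      fun b hb => degree_of_mem_Icc hb.2
  have hup : ContinuousOn (s.degree u) (K ∩ {b | 2 / 3 ≤ s.height b}) :=
    (hu.comp s.continuous_upper.continuousOn
      fun b hb => hKF b hb.1 (upper_mem_fiber (le_trans (by norm_num) hb.2))).congr
      fun b hb => degree_of_two_thirds_le hb.2
  have hlow_closed := hK.inter (isClosed_le hφ (continuous_const (y := 1 / 3)))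
  have hmid_closed := hK.inter (isClosed_Icc.preimage hφ (t := Icc (1 / 3) (2 / 3)))
  have hup_closed := hK.inter (isClosed_le (continuous_const (y := 2 / 3)) hφ)
  refine ((hlow.union_of_isClosed hmid hlow_closed hmid_closed).union_of_isClosed hup
    (hlow_closed.union hmid_closed) hup_closed).mono fun b hb => ?_
  rcases le_total (s.height b) (1 / 3) with h | h
  · exact Or.inl (Or.inl ⟨hb, h⟩)
  · exact (le_total (s.height b) (2 / 3)).imp (fun h' => Or.inr ⟨hb, h, h'⟩) (fun h' => ⟨hb, h'⟩)

lemma degree_eq_degree (hK : IsClosed K) (hKconn : IsPreconnected K)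
    (hKF : ∀ b ∈ K, s.fiber b ⊆ F) (hu : ContinuousOn u F) {b c : B} (hb : b ∈ K) (hc : c ∈ K) :
    s.degree u b = s.degree u c :=
  hKconn.constant (continuousOn_degree hK hKF hu) hb hc

/-- `D` contributes no degree over `K`: every locally constant function on `G` supported in `D` has
degree zero. -/
def IsNull (s : ZigzagSheets B E) (K : Set B) (G D : Set E) : Prop :=
  ∀ u : E → ℤ, ContinuousOn u G → EqOn u 0 (G \ D) → ∀ b ∈ K, s.degree u b = 0

lemma isNull_empty (hKG : ∀ b ∈ K, s.fiber b ⊆ G) : s.IsNull K G ∅ :=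
  fun _ _ hsupp b hb => degree_eq_zero_of_eqOn_fiber fun _ hx => hsupp ⟨hKG b hb hx, id⟩

lemma IsNull.union (hDclopen : IsClopen (G ↓∩ D)) (hC : s.IsNull K G C) (hD : s.IsNull K G D) :
    s.IsNull K G (C ∪ D) := by
  intro u hu hsupp b hb
  have hin : s.degree (D.indicator u) b = 0 :=
    hD _ (continuousOn_indicator_of_isClopen hDclopen hu)
      (fun x hx => indicator_of_notMem hx.2 u) b hb
  have hout : s.degree (Dᶜ.indicator u) b = 0 := by
    refine hC _ (continuousOn_indicator_of_isClopen (D := Dᶜ) hDclopen.compl hu) ?_ b hb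
    rintro x ⟨hxG, hxC⟩
    by_cases hxD : x ∈ D
    · exact indicator_of_notMem (notMem_compl_iff.2 hxD) u
    · exact (indicator_of_mem hxD u).trans (hsupp ⟨hxG, fun h => h.elim hxC hxD⟩)
  rw [← indicator_self_add_compl D u, degree_add, hin, hout, add_zero]

lemma exists_isNull_of_component_disjoint_fiber [T2Space E] (hK : IsClosed K)
    (hKconn : IsPreconnected K) (hG : IsCompact G) (hKG : ∀ b ∈ K, s.fiber b ⊆ G) {z : E}
    (hz : z ∈ G) (hb : b ∈ K) (hmiss : Disjoint (connectedComponentIn G z) (s.fiber b)) :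
    ∃ D, IsClopen (G ↓∩ D) ∧ z ∈ D ∧ s.IsNull K G D := by
  obtain ⟨D, hDclopen, hzD, hDfiber⟩ := exists_isClopen_of_connectedComponentIn_subset hG hz
    (s.finite_fiber b).isClosed.isOpen_compl hmiss.subset_compl_right
  refine ⟨D, hDclopen, hzD, fun u hu hsupp c hc => ?_⟩
  rw [degree_eq_degree hK hKconn hKG hu hc hb]
  exact degree_eq_zero_of_eqOn_fiber fun x hx => hsupp ⟨hKG b hb hx, fun hxD => hDfiber hxD hx⟩

lemma exists_isNull_of_forall_component_disjoint_fiber [T2Space E] (hK : IsClosed K)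
    (hKconn : IsPreconnected K) (hG : IsCompact G) (hKG : ∀ b ∈ K, s.fiber b ⊆ G) {Z : Set E}
    (hZ : IsCompact Z) (hZG : Z ⊆ G)
    (hmiss : ∀ z ∈ Z, ∃ b ∈ K, Disjoint (connectedComponentIn G z) (s.fiber b)) :
    ∃ D, IsClopen (G ↓∩ D) ∧ Z ⊆ D ∧ s.IsNull K G D := by
  refine hZ.induction_on (p := fun T => ∃ D, IsClopen (G ↓∩ D) ∧ T ⊆ D ∧ s.IsNull K G D)
    ⟨∅, isClopen_empty, Subset.rfl, isNull_empty hKG⟩ ?_ ?_ ?_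
  · rintro T T' hTT' ⟨D, hD, hTD, hnull⟩
    exact ⟨D, hD, hTT'.trans hTD, hnull⟩
  · rintro T T' ⟨D, hD, hTD, hnull⟩ ⟨D', hD', hTD', hnull'⟩
    exact ⟨D ∪ D', hD.union hD', union_subset_union hTD hTD', hnull.union hD' hnull'⟩
  · intro z hz
    obtain ⟨b, hb, hzb⟩ := hmiss z hz
    obtain ⟨D, hD, hzD, hnull⟩ :=
      exists_isNull_of_component_disjoint_fiber hK hKconn hG hKG (hZG hz) hb hzb
    have hDnhds : D ∈ 𝓝[G] z :=
      preimage_coe_mem_nhds_subtype.1 (hD.isOpen.mem_nhds (x := ⟨z, hZG hz⟩) hzD)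
    exact ⟨D, nhdsWithin_mono z hZG hDnhds, D, hD, Subset.rfl, hnull⟩

/-- The indicator of a clopen part of `F` around `s.lower p` has degree one over all of `S`. If no
component of `G` as claimed existed, that part could be chosen to meet `G` in a null set. -/
theorem exists_component_meeting_fibers [T2Space E] (hS : IsClosed S) (hSconn : IsPreconnected S)
    (hF : IsCompact F) (hSF : ∀ b ∈ S, s.fiber b ⊆ F) (hp : p ∈ S) (hp_le : s.height p ≤ 1 / 3)
    (hKS : K ⊆ S) (hK : IsClosed K) (hKconn : IsConnected K)
    (hG : IsClosed G) (hGF : G ⊆ F) (hKG : ∀ b ∈ K, s.fiber b ⊆ G) :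
    ∃ z ∈ G, z ∈ connectedComponentIn F (s.lower p) ∧
      ∀ b ∈ K, (connectedComponentIn G z ∩ s.fiber b).Nonempty := by
  by_contra! hnone
  have hGcompact : IsCompact G := hF.of_isClosed_subset hG hGF
  have hpF : s.lower p ∈ F := hSF p hp (lower_mem_fiber (by linarith))
  obtain ⟨D, hD, hcompD, hnull⟩ := exists_isNull_of_forall_component_disjoint_fiber hK
    hKconn.isPreconnected hGcompact hKG
    (hGcompact.inter_right (isClosed_connectedComponentIn hF.isClosed (s.lower p)))
    inter_subset_left fun z hz => (hnone z hz.1 hz.2).imp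
      fun b hb => ⟨hb.1, disjoint_iff_inter_eq_empty.2 hb.2⟩
  have hGD : IsClosed (G \ D) := by
    have himage : G \ D = (↑) '' (G ↓∩ D)ᶜ := by
      rw [← preimage_compl, Subtype.image_preimage_coe, sdiff_eq]
    rw [himage]
    exact hG.isClosedEmbedding_subtypeVal.isClosedMap _ hD.compl.isClosed
  obtain ⟨A, hA, hpA, hAD⟩ := exists_isClopen_of_connectedComponentIn_subset hF hpF
    hGD.isOpen_compl fun x hx hxGD => hxGD.2 (hcompD ⟨hxGD.1, hx⟩)
  have hcont : ContinuousOn (A.indicator (1 : E → ℤ)) F :=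
    continuousOn_indicator_of_isClopen hA continuousOn_const
  obtain ⟨b, hb⟩ := hKconn.nonempty
  have hzero : s.degree (A.indicator 1) b = 0 :=
    hnull _ (hcont.mono hGF) (fun x hx => indicator_of_notMem (fun hxA => hAD hxA hx) 1) b hb
  have hone : s.degree (A.indicator 1) p = 1 := by
    rw [degree_of_le_third hp_le, indicator_of_mem hpA, Pi.one_apply]
  have hconst : s.degree (A.indicator 1) b = s.degree (A.indicator 1) p :=
    degree_eq_degree hS hSconn hSF hcont (hKS hb) hp
  omega

end ZigzagSheets

end Sheets

section Cube

/-- The product of the base space with the Hilbert cube, in which the tower is built. -/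
abbrev CubeProduct (X : Type*) := X × (ℕ → I)

namespace CubeProduct

variable {X α : Type*} {m n : ℕ} {y z : CubeProduct X}

/-- Agreement in the base space and in the coordinates of index less than `n`. -/
def AgreeBelow (n : ℕ) (y z : CubeProduct X) : Prop := z.1 = y.1 ∧ ∀ i < n, z.2 i = y.2 i

lemma AgreeBelow.mono (hmn : m ≤ n) (h : AgreeBelow n y z) : AgreeBelow m y z :=
  ⟨h.1, fun i hi => h.2 i (hi.trans_le hmn)⟩

/-- The map `f` only involves the base space and the coordinates of index less than `n`. -/
def DependsBelow (n : ℕ) (f : CubeProduct X → α) : Prop :=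
  ∀ ⦃y z⦄, AgreeBelow n y z → f z = f y

/-- Membership in `S` only involves the base space and the coordinates of index less than `n`. -/
def IsCylinder (n : ℕ) (S : Set (CubeProduct X)) : Prop :=
  ∀ ⦃y⦄, y ∈ S → ∀ ⦃z⦄, AgreeBelow n y z → z ∈ S

lemma IsCylinder.mono {S : Set (CubeProduct X)} (hmn : m ≤ n) (hS : IsCylinder m S) :
    IsCylinder n S :=
  fun _ hy _ h => hS hy (h.mono hmn)

lemma IsCylinder.inter {S T : Set (CubeProduct X)} (hS : IsCylinder n S) (hT : IsCylinder n T) :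
    IsCylinder n (S ∩ T) :=
  fun _ hy _ h => ⟨hS hy.1 h, hT hy.2 h⟩

/-- The point `y` with its coordinate of index `n` replaced by `t`. -/
def setCoord (n : ℕ) (t : I) (y : CubeProduct X) : CubeProduct X := (y.1, update y.2 n t)

lemma agreeBelow_setCoord (n : ℕ) (t : I) (y : CubeProduct X) : AgreeBelow n y (setCoord n t y) :=
  ⟨rfl, fun _ hi => update_of_ne hi.ne _ _⟩

lemma setCoord_apply_self (n : ℕ) (t : I) (y : CubeProduct X) : (setCoord n t y).2 n = t :=
  update_self _ _ _

/-- The graph over the cube of the fold `zigzag = f`, the fold variable being the coordinate of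
index `n`. -/
def zigzagGraph (n : ℕ) (f : CubeProduct X → I) : Set (CubeProduct X) :=
  {y | zigzag (y.2 n) = f y}

lemma isCylinder_zigzagGraph {f : CubeProduct X → I} (hf : DependsBelow n f) :
    IsCylinder (n + 1) (zigzagGraph n f) := by
  intro y hy z h
  change zigzag (z.2 n) = f z
  rw [h.2 n n.lt_succ_self, hf (h.mono n.le_succ)]
  exact hy

variable [TopologicalSpace X]

lemma continuous_setCoord {n : ℕ} {t : CubeProduct X → I} (ht : Continuous t) :
    Continuous fun y => setCoord n (t y) y :=
  continuous_fst.prodMk (continuous_snd.update n ht)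

lemma isPreconnected_setOf_agreeBelow (n : ℕ) (y : CubeProduct X) :
    IsPreconnected {z | AgreeBelow n y z} := by
  have hbox : {z | AgreeBelow n y z} =
      {y.1} ×ˢ univ.pi fun i => if i < n then {y.2 i} else (univ : Set I) := by
    ext z
    simp only [AgreeBelow, mem_ofPred_eq, mem_prod, mem_singleton_iff, mem_univ_pi]
    refine and_congr_right' (forall_congr' fun i => ?_)
    split_ifs with hi <;> simp [hi]
  rw [hbox]
  refine isPreconnected_singleton.prod (isPreconnected_univ_pi fun i => ?_)
  split_ifs
  · exact isPreconnected_singleton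
  · exact isPreconnected_univ

lemma IsCylinder.connectedComponentIn {S : Set (CubeProduct X)} (hS : IsCylinder n S)
    (z : CubeProduct X) : IsCylinder n (connectedComponentIn S z) := by
  intro y hy y' hyy'
  rw [connectedComponentIn_eq hy]
  exact (isPreconnected_setOf_agreeBelow n y).subset_connectedComponentIn ⟨rfl, fun _ _ => rfl⟩
    (fun _ h => hS (connectedComponentIn_subset S z hy) h) hyy'

/-- The map resetting all coordinates of index at least `n` to zero. -/
def truncate (n : ℕ) : C(CubeProduct X, CubeProduct X) :=
  ⟨fun y => (y.1, fun i => if i < n then y.2 i else 0), by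
    refine continuous_fst.prodMk (continuous_pi fun i => ?_)
    split_ifs <;> fun_prop⟩

lemma dependsBelow_truncate (n : ℕ) : DependsBelow n (truncate (X := X) n) := by
  rintro y z ⟨hbase, hcoord⟩
  refine Prod.ext hbase (funext fun i => ?_)
  by_cases hi : i < n
  · simp [truncate, hi, hcoord i hi]
  · simp [truncate, hi]

lemma tendsto_truncate : Tendsto (truncate (X := X)) atTop (𝓝 (ContinuousMap.id _)) := by
  let scale : C((ℕ → I) × CubeProduct X, CubeProduct X) := ⟨fun p => (p.2.1, p.1 * p.2.2), by
    fun_prop⟩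
  let mask : ℕ → ℕ → I := fun n i => if i < n then 1 else 0
  have hmask : Tendsto mask atTop (𝓝 1) := tendsto_pi_nhds.2 fun i =>
    tendsto_const_nhds.congr' <| (eventually_gt_atTop i).mono fun n hn => (if_pos hn).symm
  have htrunc : ∀ n, scale.curry (mask n) = truncate n := fun n => by
    ext y i : 3 <;> simp [scale, mask, truncate]
  have hone : scale.curry 1 = ContinuousMap.id _ := by
    ext y : 1; simp [scale]
  simpa only [comp_def, htrunc, hone] using (scale.curry.continuous.tendsto 1).comp hmask

lemma exists_denseRange_dependsBelow (X : Type*) [MetricSpace X] [CompactSpace X] :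
    ∃ f : ℕ → C(CubeProduct X, I), DenseRange f ∧ ∀ n, DependsBelow n (f n) := by
  let d := TopologicalSpace.denseSeq C(CubeProduct X, I)
  let f : ℕ → C(CubeProduct X, I) := fun n => (d n.unpair.1).comp (truncate n)
  refine ⟨f, dense_closure.1 ((TopologicalSpace.denseRange_denseSeq _).mono ?_),
    fun n y z h => congrArg (d n.unpair.1) (dependsBelow_truncate n h)⟩
  rintro _ ⟨k, rfl⟩
  have hlim : Tendsto (fun N => (d k).comp (truncate N)) atTop (𝓝 (d k)) :=
    ((ContinuousMap.continuous_postcomp (d k)).tendsto _).comp tendsto_truncate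
  have hpair : Tendsto (Nat.pair k) atTop atTop :=
    tendsto_atTop_mono (Nat.right_le_pair k) tendsto_id
  refine mem_closure_of_tendsto (hlim.comp hpair) (.of_forall fun N => ⟨Nat.pair k N, ?_⟩)
  simp [f]

lemma isClosed_zigzagGraph (n : ℕ) {f : CubeProduct X → I} (hf : Continuous f) :
    IsClosed (zigzagGraph n f) :=
  isClosed_eq (continuous_zigzag.comp (by fun_prop)) (by fun_prop)

/-- The sheets of the fold `zigzagGraph n f`, as sections over the cube itself. -/
noncomputable def zigzagSheets (n : ℕ) (f : C(CubeProduct X, I)) :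
    ZigzagSheets (CubeProduct X) (CubeProduct X) where
  height y := f y
  lower y := setCoord n ⟨f y / 2, by linarith [(f y).2.1], by linarith [(f y).2.2]⟩ y
  middle y := setCoord n ⟨1 - f y, by linarith [(f y).2.2], by linarith [(f y).2.1]⟩ y
  upper y := setCoord n ⟨(1 + f y) / 2, by linarith [(f y).2.1], by linarith [(f y).2.2]⟩ y
  continuous_height := by fun_prop
  continuous_lower := continuous_setCoord (by fun_prop)
  continuous_middle := continuous_setCoord (by fun_prop)
  continuous_upper := continuous_setCoord (by fun_prop)
  lower_eq_middle y hy := by simp only [hy]; norm_num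
  middle_eq_upper y hy := by simp only [hy]; norm_num

lemma agreeBelow_of_mem_fiber {f : C(CubeProduct X, I)} (hz : z ∈ (zigzagSheets n f).fiber y) :
    AgreeBelow n y z := by
  rcases hz with ⟨-, rfl⟩ | ⟨-, rfl⟩ | ⟨-, rfl⟩ <;> exact agreeBelow_setCoord n _ y

lemma fiber_subset_zigzagGraph {f : C(CubeProduct X, I)} (hf : DependsBelow n f)
    (y : CubeProduct X) : (zigzagSheets n f).fiber y ⊆ zigzagGraph n f := by
  intro z hz
  change zigzag (z.2 n) = f z
  rw [hf (agreeBelow_of_mem_fiber hz)]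
  rcases hz with ⟨hy, rfl⟩ | ⟨hy, rfl⟩ | ⟨hy, rfl⟩ <;> simp only [zigzagSheets, setCoord_apply_self]
  · exact zigzag_half hy
  · exact zigzag_one_sub hy.1 hy.2
  · exact zigzag_one_add_half hy

end CubeProduct

end Cube

section ZigzagCover

open CubeProduct

variable {X : Type*} [TopologicalSpace X] {n : ℕ} {f : C(CubeProduct X, I)}
  {S K : Set (CubeProduct X)}

/-- A continuum in the cube that is a cylinder over the first `n` coordinates. -/
structure IsCylindricalContinuum (n : ℕ) (S : Set (CubeProduct X)) : Prop where
  isClosed : IsClosed S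
  isConnected : IsConnected S
  isCylinder : IsCylinder n S

lemma IsCylindricalContinuum.succ (hS : IsCylindricalContinuum n S) :
    IsCylindricalContinuum (n + 1) S :=
  ⟨hS.isClosed, hS.isConnected, hS.isCylinder.mono n.le_succ⟩

lemma IsCylindricalContinuum.fiber_subset (hf : DependsBelow n f)
    (hS : IsCylindricalContinuum n S) {y : CubeProduct X} (hy : y ∈ S) :
    (zigzagSheets n f).fiber y ⊆ S ∩ zigzagGraph n f :=
  subset_inter (fun _ hz => hS.isCylinder hy (agreeBelow_of_mem_fiber hz))
    (fiber_subset_zigzagGraph hf y)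

lemma IsCylindricalContinuum.component_inter_zigzagGraph (hf : DependsBelow n f)
    (hS : IsCylindricalContinuum n S) {z : CubeProduct X} (hz : z ∈ S ∩ zigzagGraph n f) :
    IsCylindricalContinuum (n + 1) (connectedComponentIn (S ∩ zigzagGraph n f) z) where
  isClosed := isClosed_connectedComponentIn
    (hS.isClosed.inter (isClosed_zigzagGraph n f.continuous)) z
  isConnected := isConnected_connectedComponentIn_iff.2 hz
  isCylinder := (hS.succ.isCylinder.inter (isCylinder_zigzagGraph hf)).connectedComponentIn z

/-- The relation between consecutive stages of the tower: `S'` lies in the fold of `f` over `S`,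
and subcontinua of `S` lift to `S'` without changing their projection to `X`. The fold is imposed
only when `f ≤ 1/3` somewhere on `S`, where the lone lower sheet is the source of degree one. -/
structure IsZigzagCover (n : ℕ) (f : CubeProduct X → I) (S S' : Set (CubeProduct X)) : Prop where
  subset : S' ⊆ S
  subset_zigzagGraph : (∃ p ∈ S, (f p : ℝ) ≤ 1 / 3) → S' ⊆ zigzagGraph n f
  exists_lift : ∀ K ⊆ S, IsCylindricalContinuum n K →
    ∃ K' ⊆ K, K' ⊆ S' ∧ IsCylindricalContinuum (n + 1) K' ∧ Prod.fst '' K' = Prod.fst '' K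

lemma IsCylindricalContinuum.exists_lift_component [CompactSpace X] [T2Space X]
    (hf : DependsBelow n f) (hS : IsCylindricalContinuum n S) {p : CubeProduct X} (hp : p ∈ S)
    (hfp : (f p : ℝ) ≤ 1 / 3) (hKS : K ⊆ S) (hK : IsCylindricalContinuum n K) :
    ∃ K' ⊆ K, K' ⊆ connectedComponentIn (S ∩ zigzagGraph n f) ((zigzagSheets n f).lower p) ∧
      IsCylindricalContinuum (n + 1) K' ∧ Prod.fst '' K' = Prod.fst '' K := by
  have hgraph := isClosed_zigzagGraph n f.continuous
  obtain ⟨z, hz, hzp, hmeet⟩ := ZigzagSheets.exists_component_meeting_fibers hS.isClosed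
    hS.isConnected.isPreconnected (hS.isClosed.inter hgraph).isCompact
    (fun _ => hS.fiber_subset hf) hp hfp hKS hK.isClosed hK.isConnected
    (hK.isClosed.inter hgraph) (inter_subset_inter_left _ hKS) (fun _ => hK.fiber_subset hf)
  have hK'K : connectedComponentIn (K ∩ zigzagGraph n f) z ⊆ K :=
    (connectedComponentIn_subset _ _).trans inter_subset_left
  refine ⟨connectedComponentIn (K ∩ zigzagGraph n f) z, hK'K, ?_,
    hK.component_inter_zigzagGraph hf hz, (image_mono hK'K).antisymm ?_⟩
  · rw [connectedComponentIn_eq hzp]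
    exact connectedComponentIn_mono _ (inter_subset_inter_left _ hKS)
  · rintro _ ⟨y, hy, rfl⟩
    obtain ⟨y', hy', hyy'⟩ := hmeet y hy
    exact ⟨y', hy', (agreeBelow_of_mem_fiber hyy').1⟩

theorem IsCylindricalContinuum.exists_isZigzagCover [CompactSpace X] [T2Space X]
    (hf : DependsBelow n f) (hS : IsCylindricalContinuum n S) :
    ∃ S', IsCylindricalContinuum (n + 1) S' ∧ IsZigzagCover n f S S' := by
  by_cases hlow : ∃ p ∈ S, (f p : ℝ) ≤ 1 / 3
  · obtain ⟨p, hp, hfp⟩ := hlow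
    have hlower : (zigzagSheets n f).lower p ∈ S ∩ zigzagGraph n f :=
      hS.fiber_subset hf hp (ZigzagSheets.lower_mem_fiber (hfp.trans (by norm_num)))
    have hsub := connectedComponentIn_subset (S ∩ zigzagGraph n f) ((zigzagSheets n f).lower p)
    exact ⟨_, hS.component_inter_zigzagGraph hf hlower, hsub.trans inter_subset_left,
      fun _ => hsub.trans inter_subset_right, fun _ => hS.exists_lift_component hf hp hfp⟩
  · exact ⟨S, hS.succ, Subset.rfl, fun h => absurd h hlow,
      fun K hKS hK => ⟨K, Subset.rfl, hKS, hK.succ, rfl⟩⟩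

end ZigzagCover

section Tower

open CubeProduct

variable {X : Type*} [TopologicalSpace X] {f : ℕ → C(CubeProduct X, I)}
  {S : ℕ → Set (CubeProduct X)}

theorem exists_tower [CompactSpace X] [T2Space X] [ConnectedSpace X]
    (hf : ∀ n, DependsBelow n (f n)) :
    ∃ S : ℕ → Set (CubeProduct X), S 0 = univ ∧
      ∀ n, IsCylindricalContinuum n (S n) ∧ IsZigzagCover n (f n) (S n) (S (n + 1)) :=
  exists_seq_of_forall_exists_succ (P := IsCylindricalContinuum)
    (R := fun n => IsZigzagCover n (f n)) ⟨isClosed_univ, isConnected_univ, fun _ _ _ _ => trivial⟩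
    fun n _ hS => hS.exists_isZigzagCover (hf n)

theorem exists_lift_iInter [CompactSpace X] [T2Space X] (hS0 : S 0 = univ)
    (hS : ∀ n, IsZigzagCover n (f n) (S n) (S (n + 1))) {K : Set X} (hK : IsClosed K)
    (hKconn : IsConnected K) :
    ∃ L ⊆ ⋂ n, S n, IsClosed L ∧ IsConnected L ∧ Prod.fst '' L = K := by
  have hstart : IsCylindricalContinuum 0 (Prod.fst ⁻¹' K : Set (CubeProduct X)) := by
    refine ⟨hK.preimage continuous_fst, ?_, fun y hy z h => ?_⟩
    · rw [← prod_univ]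
      exact hKconn.prod isConnected_univ
    · rwa [mem_preimage, h.1]
  obtain ⟨L, -, hL⟩ := exists_seq_of_forall_exists_succ
    (P := fun n L => L ⊆ S n ∧ IsCylindricalContinuum n L ∧ Prod.fst '' L = K)
    (R := fun _ L L' => L' ⊆ L)
    ⟨hS0 ▸ subset_univ _, hstart, image_preimage_eq K Prod.fst_surjective⟩
    fun n L ⟨hLS, hL, hLK⟩ =>
      let ⟨L', hL'L, hL'S, hL', himage⟩ := (hS n).exists_lift L hLS hL
      ⟨L', ⟨hL'S, hL', himage.trans hLK⟩, hL'L⟩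
  have hcompact : ∀ n, IsCompact (L n) := fun n => (hL n).1.2.1.isClosed.isCompact
  have hdir : Directed (· ⊇ ·) L := (antitone_nat_of_succ_le fun n => (hL n).2).directed_ge
  refine ⟨⋂ n, L n, iInter_mono fun n => (hL n).1.1,
    isClosed_iInter fun n => (hL n).1.2.1.isClosed,
    isConnected_iInter_of_directed hdir hcompact fun n => (hL n).1.2.1.isConnected, ?_⟩
  rw [image_iInter_of_directed_isCompact continuous_fst hdir hcompact]
  simp only [(hL _).1.2.2, iInter_const]

theorem hereditarilyIndecomposable_iInter [CompactSpace X] [T2Space X] (hf : DenseRange f)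
    (hclosed : IsClosed (⋂ n, S n)) (hS : ∀ n, IsZigzagCover n (f n) (S n) (S (n + 1))) :
    HereditarilyIndecomposable ↥(⋂ n, S n) := by
  have : CompactSpace ↥(⋂ n, S n) := isCompact_iff_compactSpace.1 hclosed.isCompact
  refine hereditarilyIndecomposable_of_zigzag_lift fun h ε hε => ?_
  obtain ⟨h', rfl⟩ := h.exists_restrict_eq hclosed
  obtain ⟨n, hn⟩ := hf.exists_dist_lt h' hε
  refine ⟨fun y => f n y, fun y => ?_, fun ⟨p, hp⟩ => ⟨fun y => y.1.2 n, by fun_prop, fun y => ?_⟩⟩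
  · rw [← Real.dist_eq, dist_comm]
    exact (ContinuousMap.dist_apply_le_dist y.1).trans_lt hn
  · exact (hS n).subset_zigzagGraph ⟨p, mem_iInter.1 p.2 n, hp⟩ (mem_iInter.1 y.2 (n + 1))

end Tower

/-- (Maćkowiak–Tymchatyn) Every metric continuum is the weakly confluent image of a
hereditarily indecomposable metric continuum. -/
theorem metric_continuum_weakly_confluent_image_of_HI
    (X : Type u) [MetricSpace X] [CompactSpace X] [ConnectedSpace X] [Nonempty X] :
    ∃ (Y : Type u) (tY : TopologicalSpace Y),
      @CompactSpace Y tY ∧ @T2Space Y tY ∧ @ConnectedSpace Y tY ∧ Nonempty Y ∧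
      @TopologicalSpace.MetrizableSpace Y tY ∧
      @HereditarilyIndecomposable Y tY ∧
      ∃ f : Y → X, @Continuous Y X tY _ f ∧ Surjective f ∧
        @WeaklyConfluent Y X tY _ f := by
  obtain ⟨f, hfdense, hf⟩ := CubeProduct.exists_denseRange_dependsBelow X
  obtain ⟨S, hS0, hS⟩ := exists_tower hf
  have hcover := fun n => (hS n).2
  have hclosed : IsClosed (⋂ n, S n) := isClosed_iInter fun n => (hS n).1.isClosed
  have hconn : IsConnected (⋂ n, S n) := isConnected_iInter_of_directed
    (antitone_nat_of_succ_le fun n => (hcover n).subset).directed_ge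
    (fun n => (hS n).1.isClosed.isCompact) fun n => (hS n).1.isConnected
  have hconfluent : WeaklyConfluent (Prod.fst ∘ ((↑) : ↥(⋂ n, S n) → CubeProduct X)) :=
    weaklyConfluent_comp_subtypeVal fun _ => exists_lift_iInter hS0 hcover
  exact ⟨↥(⋂ n, S n), inferInstance, isCompact_iff_compactSpace.1 hclosed.isCompact,
    inferInstance, isConnected_iff_connectedSpace.1 hconn, hconn.nonempty.to_subtype,
    inferInstance, hereditarilyIndecomposable_iInter hfdense hclosed hcover, _,
    continuous_fst.comp continuous_subtype_val, hconfluent.surjective, hconfluent⟩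
end
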